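/- With the setup below and h_L a function as described: for every integer l ≥ 2 there exist constants c_1 > 0, 0 < c_2 ≤ 1 and a threshold N_1, all depending only on F, L, l and c_0, such that if N ≥ N_1, δ > (log P)^{−100}, and B is the image in ℤ/Pℤ of a set of integers contained in [−P/4, P/4] with |B| ≥ (log P)^{k+101}, then Λ_L(f_{A'} * f_B) ≥ c_1 · h_L(c_2 · δ^{l/(l−1)}) · P^{s−1}. -/

import Mathlib

/-- The primorial of a real number `z`: the product of all primes `p ≤ z`. -/
noncomputable def primor (z : ℝ) : ℕ :=
  ∏ p ∈ (Finset.range (⌊z⌋₊ + 1)).filter Nat.Prime, p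

/-- `S_F(N, z)`: the set of natural numbers `n ≤ N` with `gcd(F(n), P(z)) = 1`. -/
noncomputable def SFset (F : ℤ → ℤ) (N : ℕ) (z : ℝ) : Finset ℕ :=
  (Finset.Icc 1 N).filter (fun n => Int.gcd (F n) (primor z) = 1)

/-- `A_b = {n : b + nM ∈ A}` (automatically contained in `[0, N]`). -/
def Abset (A : Finset ℕ) (N M b : ℕ) : Finset ℕ :=
  (Finset.range (N + 1)).filter (fun n => b + n * M ∈ A)

/-- `f_C = d(C)⁻¹ · 1_C`, where `d(C) = |C|/P`. -/
noncomputable def fCfun {P : ℕ} (C : Finset (ZMod P)) : ZMod P → ℝ :=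
  fun n => ((P : ℝ) / (C.card : ℝ)) * (if n ∈ C then 1 else 0)

/-- Convolution `(f*g)(n) = P⁻¹ ∑_y f(n−y) g(y)` on `ℤ/Pℤ`. -/
noncomputable def convP {P : ℕ} [Fact P.Prime] (f g : ZMod P → ℝ) : ZMod P → ℝ :=
  fun n => (1 / (P : ℝ)) * ∑ y : ZMod P, f (n - y) * g y

/-- `Λ_L(f) = ∑_{c₁n₁+⋯+cₛnₛ=0} ∏ f(nᵢ)`. -/
noncomputable def LamL {P : ℕ} [Fact P.Prime] {s : ℕ} (cc : Fin s → ℤ)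
    (f : ZMod P → ℝ) : ℝ :=
  ∑ n ∈ Finset.univ.filter
      (fun n : Fin s → ZMod P => ∑ i, (cc i : ZMod P) * n i = 0),
    ∏ i, f (n i)

section

open Finset

lemma aux_pow_dvd_fact (p m : ℕ) (hp : 0 < p) : p ^ m ∣ (p * m).factorial := by
  induction m with
  | zero => simp
  | succ m ih =>
    have h1 : p * (m + 1) = (p * m + (p - 1)) + 1 := by
      have : p - 1 + 1 = p := Nat.sub_add_cancel hp
      rw [mul_add, mul_one]; omega
    rw [h1, Nat.factorial_succ, ← h1, pow_succ, mul_comm]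
    refine mul_dvd_mul (Dvd.intro _ rfl) (ih.trans (Nat.factorial_dvd_factorial (by omega)))

/-- Upper bound in Mertens' first theorem. -/
lemma mertens_one (n : ℕ) (hn : 1 ≤ n) :
    ∑ p ∈ Nat.primesBelow (n + 1), Real.log p / p ≤ Real.log n + Real.log 4 := by
  have hn0 : (0 : ℝ) < n := by exact_mod_cast hn
  have h1 : (∏ p ∈ Nat.primesBelow (n + 1), p ^ (n / p)) ∣ n.factorial := by
    apply Finset.prod_dvd_of_isRelPrime
    · intro p hp q hq hpq
      have hp' := Nat.prime_of_mem_primesBelow hp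
      have hq' := Nat.prime_of_mem_primesBelow hq
      exact Nat.coprime_iff_isRelPrime.1 <| Nat.Coprime.pow _ _ ((Nat.coprime_primes hp' hq').2 hpq)
    · intro p hp
      exact (aux_pow_dvd_fact p (n / p) (Nat.prime_of_mem_primesBelow hp).pos).trans (Nat.factorial_dvd_factorial (Nat.mul_div_le n p))
  have h2 : (∏ p ∈ Nat.primesBelow (n + 1), p ^ (n / p)) ≤ n ^ n :=
    (Nat.le_of_dvd (Nat.factorial_pos n) h1).trans (Nat.factorial_le_pow n)
  have h3 : ∑ p ∈ Nat.primesBelow (n + 1), ((n / p : ℕ) : ℝ) * Real.log p ≤ n * Real.log n := by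
    have h4 : Real.log ((∏ p ∈ Nat.primesBelow (n + 1), p ^ (n / p) : ℕ) : ℝ) ≤ Real.log ((n ^ n : ℕ) : ℝ) := by
      apply Real.log_le_log
      · norm_cast
        apply Finset.prod_pos
        intro p hp
        exact pow_pos (Nat.prime_of_mem_primesBelow hp).pos _
      · exact_mod_cast h2
    rw [Nat.cast_pow, Real.log_pow, Nat.cast_prod, Real.log_prod] at h4
    · simpa using h4
    · intro p hp
      have := (Nat.prime_of_mem_primesBelow hp).pos
      positivity
  have h5 : ∑ p ∈ Nat.primesBelow (n + 1), Real.log p ≤ n * Real.log 4 := by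
    have h6 : Real.log ((primorial n : ℕ) : ℝ) ≤ Real.log ((4 ^ n : ℕ) : ℝ) := by
      apply Real.log_le_log
      · exact_mod_cast primorial_pos n
      · exact_mod_cast primorial_le_four_pow n
    rw [Nat.cast_pow, Real.log_pow, primorial, Nat.cast_prod, Real.log_prod] at h6
    · simpa [Nat.primesBelow] using h6
    · intro p hp
      have := (Finset.mem_filter.1 hp).2.pos
      positivity
  have h7 : ∑ p ∈ Nat.primesBelow (n + 1), (n : ℝ) * (Real.log p / p) ≤ 
      ∑ p ∈ Nat.primesBelow (n + 1), (((n / p : ℕ) : ℝ) * Real.log p + Real.log p) := by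
    apply Finset.sum_le_sum
    intro p hp
    have hp' := (Nat.prime_of_mem_primesBelow hp).pos
    have h8 : (n : ℝ) / p ≤ ((n / p : ℕ) : ℝ) + 1 := by
      rw [div_le_iff₀ (by exact_mod_cast hp')]
      have := Nat.lt_div_mul_add (a := n) hp'
      have h9 : n ≤ (n / p + 1) * p := by rw [add_mul, one_mul]; omega
      exact_mod_cast h9
    have h10 : 0 ≤ Real.log p := Real.log_natCast_nonneg p
    calc (n : ℝ) * (Real.log p / p) = (n / p) * Real.log p := by ring
      _ ≤ (((n / p : ℕ) : ℝ) + 1) * Real.log p := by gcongr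
      _ = _ := by ring
  rw [← Finset.mul_sum, Finset.sum_add_distrib] at h7
  have h11 : (n : ℝ) * ∑ p ∈ Nat.primesBelow (n + 1), Real.log p / p ≤ n * (Real.log n + Real.log 4) := by
    linarith
  exact le_of_mul_le_mul_left h11 hn0

lemma zeta_partial (ε : ℝ) (hε : 0 < ε) (n : ℕ) :
    ∑ m ∈ Finset.Icc 1 (n + 1), ((m : ℝ) ^ (-(1 + ε))) ≤ 1 + 1 / ε - (1 / ε) * ((n + 1 : ℕ) : ℝ) ^ (-ε) := by
  induction n with
  | zero => simp
  | succ n ih =>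
    rw [Finset.sum_Icc_succ_top (by omega)]
    have key : ((n + 1 + 1 : ℕ) : ℝ) ^ (-(1 + ε)) ≤
        (1 / ε) * ((n + 1 : ℕ) : ℝ) ^ (-ε) - (1 / ε) * ((n + 1 + 1 : ℕ) : ℝ) ^ (-ε) := by
      set x : ℝ := ((n + 1 + 1 : ℕ) : ℝ) with hx
      have hx2 : 2 ≤ x := by rw [hx]; push_cast; linarith [(Nat.cast_nonneg n : (0:ℝ) ≤ n)]
      have hx0 : 0 < x := by linarith
      have h1 : ((n + 1 : ℕ) : ℝ) = x * (1 - 1 / x) := by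
        rw [mul_sub, mul_one_div_cancel hx0.ne', hx]; push_cast; ring
      have h2 : 0 < 1 - 1 / x := by
        rw [sub_pos, div_lt_one hx0]; linarith
      rw [h1, Real.mul_rpow hx0.le h2.le]
      have h3 : 1 + ε * (1 / x) ≤ (1 - 1 / x) ^ (-ε) := by
        rw [Real.rpow_def_of_pos h2]
        have h4 : Real.log (1 - 1 / x) ≤ (1 - 1 / x) - 1 := Real.log_le_sub_one_of_pos h2
        have h5 := Real.add_one_le_exp (Real.log (1 - 1 / x) * -ε)
        nlinarith
      have h6 : x ^ (-(1 + ε)) = x ^ (-ε) * (1 / x) := by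
        rw [neg_add, add_comm, Real.rpow_add hx0, Real.rpow_neg_one]; simp
      have h7 : 0 < x ^ (-ε) := Real.rpow_pos_of_pos hx0 _
      rw [h6]
      have h8 := mul_le_mul_of_nonneg_left h3 h7.le
      have h9 : x ^ (-ε) * (1 / x) = (1 / ε) * (x ^ (-ε) * (1 + ε * (1 / x))) - (1 / ε) * x ^ (-ε) := by
        field_simp; ring
      rw [h9]
      have := mul_le_mul_of_nonneg_left h8 (one_div_pos.2 hε).le
      linarith
    linarith

lemma mertens_two_upper (n : ℕ) (hn : 3 ≤ n) :
    ∑ p ∈ Nat.primesBelow (n + 1), (1 : ℝ) / p ≤ Real.log (Real.log n) + 4 := by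
  have hn0 : (3 : ℝ) ≤ n := by exact_mod_cast hn
  have hlog : 1 ≤ Real.log n := by
    rw [Real.le_log_iff_exp_le (by linarith)]
    linarith [Real.exp_one_lt_d9]
  set ε : ℝ := 1 / Real.log n with hε
  have hε0 : 0 < ε := by positivity
  let f : ℕ →* ℝ := 
    { toFun := fun m => (m : ℝ) ^ (-(1 + ε))
      map_one' := by simp
      map_mul' := by
        intro x y
        push_cast
        exact Real.mul_rpow (Nat.cast_nonneg _) (Nat.cast_nonneg _) }
  have hf : ∀ m, f m = (m : ℝ) ^ (-(1 + ε)) := fun _ => rfl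
  have hf0 : ∀ m, 0 ≤ f m := fun m => Real.rpow_nonneg (Nat.cast_nonneg _) _
  have hf1 : ∀ {p : ℕ}, p.Prime → f p < 1 := by
    intro p hp
    rw [hf]
    exact Real.rpow_lt_one_of_one_lt_of_neg (by exact_mod_cast hp.one_lt) (by linarith)
  have hfn : ∀ {p : ℕ}, p.Prime → ‖f p‖ < 1 := by
    intro p hp
    rw [Real.norm_of_nonneg (hf0 p)]
    exact hf1 hp
  obtain ⟨-, hs⟩ := EulerProduct.summable_and_hasSum_smoothNumbers_prod_primesBelow_geometric hfn (n + 1)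
  have hz : ∏ p ∈ (n + 1).primesBelow, (1 - f p)⁻¹ ≤ 1 + Real.log n := by
    refine hasSum_le_of_sum_le hs ?_
    intro t
    have h1 : ∑ i ∈ t, f i = ∑ m ∈ t.map (Function.Embedding.subtype _), f m := by
      rw [Finset.sum_map]; rfl
    rw [h1]
    set T := t.map (Function.Embedding.subtype _) with hT
    obtain ⟨B, hB⟩ := T.exists_nat_subset_range
    have h2 : T ⊆ Finset.Icc 1 (B + 1) := by
      intro m hm
      have := Finset.mem_range.1 (hB hm)
      rw [hT, Finset.mem_map] at hm
      obtain ⟨a, _, rfl⟩ := hm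
      have h3 := Nat.ne_zero_of_mem_smoothNumbers a.2
      simp only [Finset.mem_Icc]
      change a.1 < B at this
      change 1 ≤ a.1 ∧ a.1 ≤ B + 1
      omega
    calc ∑ m ∈ T, f m ≤ ∑ m ∈ Finset.Icc 1 (B + 1), f m :=
          Finset.sum_le_sum_of_subset_of_nonneg h2 (fun _ _ _ => hf0 _)
      _ ≤ _ := zeta_partial ε hε0 B
      _ ≤ 1 + 1 / ε := by
          have : 0 ≤ (1 / ε) * ((B + 1 : ℕ) : ℝ) ^ (-ε) := by positivity
          linarith
      _ = 1 + Real.log n := by rw [hε, one_div_one_div]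
  have hprod : ∑ p ∈ Nat.primesBelow (n + 1), f p ≤ Real.log (1 + Real.log n) := by
    calc ∑ p ∈ Nat.primesBelow (n + 1), f p ≤ ∑ p ∈ Nat.primesBelow (n + 1), Real.log ((1 - f p)⁻¹) := by
          apply Finset.sum_le_sum
          intro p hp
          have h1 := hf1 (Nat.prime_of_mem_primesBelow hp)
          rw [Real.log_inv]
          have := Real.log_le_sub_one_of_pos (sub_pos.2 h1)
          linarith
      _ = Real.log (∏ p ∈ (n + 1).primesBelow, (1 - f p)⁻¹) := by
          rw [Real.log_prod]
          intro p hp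
          have h1 := hf1 (Nat.prime_of_mem_primesBelow hp)
          exact inv_ne_zero (sub_pos.2 h1).ne'
      _ ≤ _ := by
          apply Real.log_le_log _ hz
          apply Finset.prod_pos
          intro p hp
          have h1 := hf1 (Nat.prime_of_mem_primesBelow hp)
          exact inv_pos.2 (sub_pos.2 h1)
  have h2 : Real.log (1 + Real.log n) ≤ Real.log (Real.log n) + 1 := by
    calc Real.log (1 + Real.log n) ≤ Real.log (2 * Real.log n) := 
          Real.log_le_log (by linarith) (by linarith)
      _ = Real.log 2 + Real.log (Real.log n) := by rw [Real.log_mul] <;> linarith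
      _ ≤ _ := by linarith [Real.log_two_lt_d9]
  have h3 : ∑ p ∈ Nat.primesBelow (n + 1), (1 : ℝ) / p ≤
      ∑ p ∈ Nat.primesBelow (n + 1), (f p + ε * (Real.log p / p)) := by
    apply Finset.sum_le_sum
    intro p hp
    have hp0 : (0 : ℝ) < p := by exact_mod_cast (Nat.prime_of_mem_primesBelow hp).pos
    have h4 : f p = (p : ℝ) ^ (-ε) * (1 / p) := by
      rw [hf, neg_add, add_comm, Real.rpow_add hp0, Real.rpow_neg_one]; simp
    have h5 : 1 - ε * Real.log p ≤ (p : ℝ) ^ (-ε) := by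
      rw [Real.rpow_def_of_pos hp0]
      have := Real.add_one_le_exp (Real.log p * -ε)
      linarith
    rw [h4]
    have := mul_le_mul_of_nonneg_right h5 (one_div_pos.2 hp0).le
    calc (1 : ℝ) / p = (1 - ε * Real.log p) * (1 / p) + ε * (Real.log p / p) := by ring
      _ ≤ _ := by linarith
  rw [Finset.sum_add_distrib, ← Finset.mul_sum] at h3
  have h6 := mul_le_mul_of_nonneg_left (mertens_one n (by omega)) hε0.le
  have h7 : ε * (Real.log n + Real.log 4) ≤ 3 := by
    have h8 : Real.log 4 ≤ 2 * 1 := by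
      rw [show (4 : ℝ) = 2 ^ 2 by norm_num, Real.log_pow]; push_cast
      linarith [Real.log_two_lt_d9]
    rw [hε, one_div, inv_mul_le_iff₀ (by linarith)]
    linarith
  linarith

lemma sum_inv_mul_le (n : ℕ) : ∑ m ∈ Finset.range n, (1 : ℝ) / ((m + 1) * (m + 2)) = 1 - 1 / (n + 1) := by
  induction n with
  | zero => simp
  | succ n ih => rw [Finset.sum_range_succ, ih]; push_cast; field_simp; ring

lemma mertens_two_lower (n : ℕ) (hn : 1 ≤ n) :
    Real.log (Real.log ((n + 1 : ℕ) : ℝ)) - 1 ≤ ∑ p ∈ Nat.primesBelow (n + 1), (1 : ℝ) / p := by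
  let f : ℕ →* ℝ := 
    { toFun := fun m => (m : ℝ)⁻¹
      map_one' := by simp
      map_mul' := by
        intro x y
        push_cast
        rw [mul_inv] }
  have hf : ∀ m, f m = (m : ℝ)⁻¹ := fun _ => rfl
  have hf0 : ∀ m, 0 ≤ f m := fun m => by rw [hf]; positivity
  have hf1 : ∀ {p : ℕ}, p.Prime → f p < 1 := by
    intro p hp
    rw [hf]
    exact inv_lt_one_of_one_lt₀ (by exact_mod_cast hp.one_lt)
  have hfn : ∀ {p : ℕ}, p.Prime → ‖f p‖ < 1 := by
    intro p hp
    rw [Real.norm_of_nonneg (hf0 p)]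
    exact hf1 hp
  obtain ⟨-, hs⟩ := EulerProduct.summable_and_hasSum_smoothNumbers_prod_primesBelow_geometric hfn (n + 1)
  have hz : Real.log ((n + 1 : ℕ) : ℝ) ≤ ∏ p ∈ (n + 1).primesBelow, (1 - f p)⁻¹ := by
    have h1 := log_add_one_le_harmonic n
    rw [harmonic_eq_sum_Icc] at h1
    refine h1.trans ?_
    push_cast
    have h2 : ∑ m ∈ Finset.Icc 1 n, (m : ℝ)⁻¹ = 
        ∑ m ∈ (Finset.Icc 1 n).subtype (· ∈ (n + 1).smoothNumbers), f m := by
      rw [Finset.sum_subtype_eq_sum_filter (f := fun m => f m) , Finset.filter_true_of_mem]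
      · rfl
      · intro m hm
        rw [Finset.mem_Icc] at hm
        exact Nat.mem_smoothNumbers_of_lt (by omega) (by omega)
    rw [h2]
    exact sum_le_hasSum _ (fun _ _ => hf0 _) hs
  have hlog : 0 < Real.log ((n + 1 : ℕ) : ℝ) := Real.log_pos (by push_cast; have : (1:ℝ) ≤ n := by exact_mod_cast hn
                                                                 linarith)
  have h1 := Real.log_le_log hlog hz
  rw [Real.log_prod] at h1
  swap
  · intro p hp
    have h1 := hf1 (Nat.prime_of_mem_primesBelow hp)
    exact inv_ne_zero (sub_pos.2 h1).ne'
  have h2 : ∑ p ∈ Nat.primesBelow (n + 1), Real.log ((1 - f p)⁻¹) ≤ 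
      ∑ p ∈ Nat.primesBelow (n + 1), ((1 : ℝ) / p + 1 / (((p - 2 : ℕ) + 1) * ((p - 2 : ℕ) + 2))) := by
    apply Finset.sum_le_sum
    intro p hp
    have hp2 := (Nat.prime_of_mem_primesBelow hp).two_le
    have h3 := hf1 (Nat.prime_of_mem_primesBelow hp)
    have := Real.log_le_sub_one_of_pos (inv_pos.2 (sub_pos.2 h3))
    refine this.trans (le_of_eq ?_)
    rw [hf]
    obtain ⟨q, rfl⟩ := Nat.exists_eq_add_of_le hp2
    have h5 : (0 : ℝ) ≤ q := Nat.cast_nonneg q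
    rw [show 2 + q - 2 = q by omega]
    push_cast
    have h4 : (1 - (2 + (q : ℝ))⁻¹) = (q + 1) / (q + 2) := by field_simp; ring
    rw [h4, inv_div]
    field_simp
    ring
  rw [Finset.sum_add_distrib] at h2
  have h3 : ∑ p ∈ Nat.primesBelow (n + 1), (1 : ℝ) / (((p - 2 : ℕ) + 1) * ((p - 2 : ℕ) + 2)) ≤ 1 := by
    have hinj : Set.InjOn (fun p : ℕ => p - 2) (Nat.primesBelow (n + 1)) := by
      intro p hp q hq h
      have hp2 := (Nat.prime_of_mem_primesBelow hp).two_le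
      have hq2 := (Nat.prime_of_mem_primesBelow hq).two_le
      simp only at h
      omega
    rw [← Finset.sum_image (f := fun m : ℕ => (1 : ℝ) / (((m : ℝ) + 1) * (m + 2))) hinj]
    calc _ ≤ ∑ m ∈ Finset.range (n + 1), (1 : ℝ) / (((m : ℝ) + 1) * (m + 2)) := by
          apply Finset.sum_le_sum_of_subset_of_nonneg
          · intro m hm
            obtain ⟨p, hp, rfl⟩ := Finset.mem_image.1 hm
            have := Nat.lt_of_mem_primesBelow hp
            simp only [Finset.mem_range]; omega
          · intros; positivity
      _ = _ := sum_inv_mul_le _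
      _ ≤ 1 := by
          have : (0 : ℝ) ≤ 1 / (((n + 1 : ℕ) : ℝ) + 1) := by positivity
          linarith
  linarith

end

section
open Finset

lemma crt_sum (m p : ℕ) (hm : 0 < m) (hp : 0 < p) (hc : Nat.Coprime m p) (f g : ℕ → ℝ)
    (hf : ∀ n, f (n % m) = f n) (hg : ∀ n, g (n % p) = g n) :
    ∑ n ∈ range (m * p), f n * g n = (∑ n ∈ range m, f n) * ∑ n ∈ range p, g n := by
  rw [Finset.sum_mul_sum, ← Finset.sum_product']
  refine Finset.sum_bij' (fun n _ => (n % m, n % p)) (fun x _ => (Nat.chineseRemainder hc x.1 x.2 : ℕ)) ?_ ?_ ?_ ?_ ?_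
  · intro n hn
    simp [Nat.mod_lt _ hm, Nat.mod_lt _ hp]
  · intro x hx
    simp only [mem_range]
    exact Nat.chineseRemainder_lt_mul hc _ _ hm.ne' hp.ne'
  · intro n hn
    rw [mem_range] at hn
    have h1 := (Nat.chineseRemainder hc (n % m) (n % p)).2
    have h2 : (Nat.chineseRemainder hc (n % m) (n % p) : ℕ) ≡ n [MOD m * p] := by
      rw [← Nat.modEq_and_modEq_iff_modEq_mul hc]
      exact ⟨h1.1.trans (Nat.mod_modEq _ _), h1.2.trans (Nat.mod_modEq _ _)⟩
    exact Nat.ModEq.eq_of_lt_of_lt h2 (Nat.chineseRemainder_lt_mul hc _ _ hm.ne' hp.ne') hn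
  · rintro ⟨x, y⟩ hx
    simp only [mem_product, mem_range] at hx
    have h1 := (Nat.chineseRemainder hc x y).2
    ext
    · exact Eq.trans h1.1 (Nat.mod_eq_of_lt hx.1)
    · exact Eq.trans h1.2 (Nat.mod_eq_of_lt hx.2)
  · intro n hn
    simp [hf, hg]

lemma prod_period (u : Finset ℕ) (φ : ℕ → ℕ → ℝ) (hφ : ∀ p n, φ p (n % p) = φ p n) (n : ℕ) :
    ∏ p ∈ u, φ p (n % ∏ q ∈ u, q) = ∏ p ∈ u, φ p n := by
  apply Finset.prod_congr rfl
  intro p hp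
  rw [← hφ p n, ← hφ p (n % _), Nat.mod_mod_of_dvd _ (Finset.dvd_prod_of_mem _ hp)]

lemma crt_prod (u : Finset ℕ) (hu : ∀ p ∈ u, p.Prime) (φ : ℕ → ℕ → ℝ)
    (hφ : ∀ p n, φ p (n % p) = φ p n) :
    ∑ n ∈ range (∏ p ∈ u, p), ∏ p ∈ u, φ p n = ∏ p ∈ u, ∑ n ∈ range p, φ p n := by
  induction u using Finset.induction_on with
  | empty => simp
  | insert p u hpu ih =>
    have hp := hu p (mem_insert_self _ _)
    have hu' : ∀ q ∈ u, q.Prime := fun q hq => hu q (mem_insert_of_mem hq)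
    rw [Finset.prod_insert hpu, Finset.prod_insert hpu, ← ih hu', ← crt_sum]
    · apply Finset.sum_congr rfl
      intro n _
      rw [Finset.prod_insert hpu]
    · exact hp.pos
    · exact Finset.prod_pos fun q hq => (hu' q hq).pos
    · apply Nat.Coprime.prod_right
      intro q hq
      exact (Nat.coprime_primes hp (hu' q hq)).2 (fun h => hpu (h ▸ hq))
    · exact hφ p
    · exact prod_period u φ hφ

lemma sum_periodic_le (q X : ℕ) (hq : 0 < q) (f : ℕ → ℝ) (B : ℝ) (hB : ∀ n, f n ≤ B) (hB0 : 0 ≤ B)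
    (hf : ∀ n, f (n % q) = f n) (hm : 0 ≤ ∑ n ∈ range q, f n) :
    ∑ n ∈ range X, f n ≤ X * ((∑ n ∈ range q, f n) / q) + q * B := by
  have h1 : ∀ a : ℕ, ∑ n ∈ range (q * a), f n = a * ∑ n ∈ range q, f n := by
    intro a
    induction a with
    | zero => simp
    | succ a ih =>
      rw [mul_add, mul_one, Finset.sum_range_add, ih]
      push_cast
      rw [add_mul, one_mul]
      congr 1
      apply Finset.sum_congr rfl
      intro x _
      rw [← hf (q * a + x), Nat.mul_add_mod, hf]
  have h2 : ∑ n ∈ range X, f n = ∑ n ∈ range (q * (X / q)), f n + ∑ n ∈ range (X % q), f (q * (X / q) + n) := by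
    rw [← Finset.sum_range_add, Nat.div_add_mod]
  rw [h2, h1]
  have hq' : (0 : ℝ) < q := by exact_mod_cast hq
  apply add_le_add
  · have : ((X / q : ℕ) : ℝ) ≤ (X : ℝ) / q := Nat.cast_div_le
    calc _ ≤ (X : ℝ) / q * ∑ n ∈ range q, f n := by gcongr
      _ = _ := by ring
  · calc _ ≤ ∑ n ∈ range (X % q), B := Finset.sum_le_sum fun _ _ => hB _
      _ = (X % q : ℕ) * B := by simp
      _ ≤ q * B := by
        have : X % q ≤ q := (Nat.mod_lt _ hq).le
        gcongr

noncomputable def theT (K : ℕ) (Om : ℕ → Finset ℕ) (p n : ℕ) : ℝ :=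
  if n % p ∈ Om p then -(((p : ℝ) - K) / K) else 1

noncomputable def hh (K : ℕ) (p : ℕ) : ℝ := (K : ℝ) / ((p : ℝ) - K)

lemma theT_per (K : ℕ) (Om : ℕ → Finset ℕ) (p n : ℕ) : theT K Om p (n % p) = theT K Om p n := by
  simp [theT]

lemma theT_sum (K : ℕ) (hK : 1 ≤ K) (Om : ℕ → Finset ℕ) (p : ℕ) (hO : Om p ⊆ range p) (hc : #(Om p) = K) :
    ∑ n ∈ range p, theT K Om p n = 0 ∧ ∑ n ∈ range p, theT K Om p n * theT K Om p n =
      p * (((p : ℝ) - K) / K) := by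
  have hK0 : (0 : ℝ) < K := by exact_mod_cast hK
  have h1 : ∀ n ∈ range p, theT K Om p n = if n ∈ Om p then -(((p : ℝ) - K) / K) else 1 := by
    intro n hn
    rw [theT, Nat.mod_eq_of_lt (mem_range.1 hn)]
  have h2 : (range p).filter (· ∈ Om p) = Om p := by
    ext x; simp only [mem_filter]; exact ⟨fun h => h.2, fun h => ⟨hO h, h⟩⟩
  have h3 : #((range p).filter (fun x => ¬ x ∈ Om p)) = (p : ℝ) - K := by
    have := Finset.card_filter_add_card_filter_not (s := range p) (· ∈ Om p)
    rw [h2, hc, card_range] at this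
    rw [eq_sub_iff_add_eq]
    rw [add_comm]; exact_mod_cast this
  constructor
  · rw [Finset.sum_congr rfl h1, Finset.sum_ite, h2]
    simp only [sum_const, nsmul_eq_mul, h3, hc]
    field_simp; ring
  · rw [Finset.sum_congr rfl (fun n hn => by rw [h1 n hn])]
    simp only [mul_ite, ite_mul, one_mul, mul_one]
    rw [Finset.sum_congr rfl (g := fun n => if n ∈ Om p then (-(((p : ℝ) - K) / K)) * (-(((p : ℝ) - K) / K)) else 1) (fun n hn => by split_ifs <;> rfl)]
    rw [Finset.sum_ite, h2]
    simp only [sum_const, nsmul_eq_mul, h3, hc]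
    field_simp; ring

lemma theT_abs (K : ℕ) (hK : 1 ≤ K) (Om : ℕ → Finset ℕ) (p : ℕ) (hp : 2 * K ≤ p) (n : ℕ) :
    |theT K Om p n| ≤ p := by
  have hK0 : (1 : ℝ) ≤ K := by exact_mod_cast hK
  have hp0 : 2 * (K : ℝ) ≤ p := by exact_mod_cast hp
  rw [theT]
  split_ifs
  · rw [abs_neg, abs_of_nonneg (div_nonneg (by linarith) (by linarith)), div_le_iff₀ (by linarith)]
    nlinarith
  · rw [abs_one]; linarith

lemma hh_bd (K : ℕ) (hK : 1 ≤ K) (p : ℕ) (hp : 2 * K ≤ p) : 0 < hh K p ∧ hh K p ≤ 1 ∧ hh K p ≤ 2 * K / p := by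
  have hK0 : (1 : ℝ) ≤ K := by exact_mod_cast hK
  have hp0 : 2 * (K : ℝ) ≤ p := by exact_mod_cast hp
  refine ⟨div_pos (by linarith) (by linarith), ?_, ?_⟩
  · rw [hh, div_le_one (by linarith)]; linarith
  · rw [hh, div_le_div_iff₀ (by linarith) (by linarith)]; nlinarith

/-- The Selberg sieve in dual form. -/
lemma selberg (K : ℕ) (hK : 1 ≤ K) (PP : Finset ℕ) (hP : ∀ p ∈ PP, p.Prime ∧ 2 * K ≤ p)
    (Om : ℕ → Finset ℕ) (hO : ∀ p ∈ PP, Om p ⊆ range p ∧ #(Om p) = K) (X R : ℕ)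
    (S : Finset ℕ) (hS : S ⊆ range X) (hSO : ∀ n ∈ S, ∀ p ∈ PP, n % p ∉ Om p) 
    (D : Finset (Finset ℕ)) (hD : D = PP.powerset.filter (fun s => ∏ p ∈ s, p ≤ R))
    (G : ℝ) (hG : G = ∑ s ∈ D, ∏ p ∈ s, hh K p) :
    (#S : ℝ) * G ^ 2 ≤ X * G + (R : ℝ) ^ 6 := by
  set h : Finset ℕ → ℝ := fun s => ∏ p ∈ s, hh K p with hh_def
  set th : Finset ℕ → ℕ → ℝ := fun s n => ∏ p ∈ s, theT K Om p n with th_def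
  have hDP : ∀ s ∈ D, s ⊆ PP ∧ ∏ p ∈ s, p ≤ R := by
    intro s hs
    rw [hD, mem_filter, mem_powerset] at hs
    exact hs
  have hh0 : ∀ s ∈ D, 0 < h s := fun s hs => Finset.prod_pos fun p hp =>
    (hh_bd K hK p (hP p ((hDP s hs).1 hp)).2).1
  have hh1 : ∀ s ∈ D, h s ≤ 1 := fun s hs => Finset.prod_le_one 
    (fun p hp => (hh_bd K hK p (hP p ((hDP s hs).1 hp)).2).1.le)
    fun p hp => (hh_bd K hK p (hP p ((hDP s hs).1 hp)).2).2.1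
  have hcardD : #D ≤ R := by
    have h1 : #(D.image (fun s => ∏ p ∈ s, p)) = #D := by
      apply Finset.card_image_of_injOn
      intro s hs t ht hst
      simp only at hst
      have h1 := Nat.primeFactors_prod (s := s) (fun p hp => (hP p ((hDP s hs).1 hp)).1)
      have h2 := Nat.primeFactors_prod (s := t) (fun p hp => (hP p ((hDP t ht).1 hp)).1)
      rw [← h1, ← h2, hst]
    rw [← h1]
    calc _ ≤ #(Icc 1 R) := by
          apply Finset.card_le_card
          intro m hm
          obtain ⟨s, hs, rfl⟩ := mem_image.1 hm
          rw [mem_Icc]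
          exact ⟨Finset.prod_pos fun p hp => (hP p ((hDP s hs).1 hp)).1.pos, (hDP s hs).2⟩
      _ = R := by simp
  have hthabs : ∀ s ∈ D, ∀ n, |th s n| ≤ R := by
    intro s hs n
    rw [th_def]
    simp only
    rw [Finset.abs_prod]
    calc _ ≤ ∏ p ∈ s, (p : ℝ) := Finset.prod_le_prod (fun _ _ => abs_nonneg _) 
            fun p hp => theT_abs K hK Om p (hP p ((hDP s hs).1 hp)).2 n
      _ = ((∏ p ∈ s, p : ℕ) : ℝ) := by push_cast; rfl
      _ ≤ R := Nat.cast_le.2 (hDP s hs).2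
  have hcorr : ∀ s ∈ D, ∀ t ∈ D, h s * h t * ∑ n ∈ range X, th s n * th t n ≤ 
      (if s = t then X * h s else 0) + (R : ℝ) ^ 4 := by
    intro s hs t ht
    set u := s ∪ t with hu
    have huP : ∀ p ∈ u, p ∈ PP := by
      intro p hp
      rcases mem_union.1 hp with hp | hp
      · exact (hDP s hs).1 hp
      · exact (hDP t ht).1 hp
    set φ : ℕ → ℕ → ℝ := fun p n => (if p ∈ s then theT K Om p n else 1) * (if p ∈ t then theT K Om p n else 1) with hφ
    have hφp : ∀ p n, φ p (n % p) = φ p n := by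
      intro p n
      simp only [hφ, theT_per]
    have hprod : ∀ n, th s n * th t n = ∏ p ∈ u, φ p n := by
      intro n
      simp only [hφ, Finset.prod_mul_distrib, Finset.prod_ite_mem]
      rw [hu, Finset.union_inter_cancel_left, Finset.union_inter_cancel_right]
    set q := ∏ p ∈ u, p with hq
    have hq0 : 0 < q := Finset.prod_pos fun p hp => (hP p (huP p hp)).1.pos
    have hqR : q ≤ R * R := by
      have h1 : q * ∏ p ∈ s ∩ t, p = (∏ p ∈ s, p) * ∏ p ∈ t, p := Finset.prod_union_inter
      have h2 : 1 ≤ ∏ p ∈ s ∩ t, p := Finset.prod_pos fun p hp => (hP p (huP p (mem_union_left _ (mem_inter.1 hp).1))).1.pos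
      calc q ≤ q * ∏ p ∈ s ∩ t, p := Nat.le_mul_of_pos_right _ h2
        _ = _ := h1
        _ ≤ R * R := Nat.mul_le_mul (hDP s hs).2 (hDP t ht).2
    have hsum : ∑ n ∈ range q, th s n * th t n = if s = t then (q : ℝ) / h s else 0 := by
      rw [Finset.sum_congr rfl (fun n _ => hprod n), hq, crt_prod u (fun p hp => (hP p (huP p hp)).1) φ hφp]
      split_ifs with hst
      · subst hst
        have : u = s := by rw [hu, Finset.union_self]
        rw [this]
        push_cast
        rw [hh_def, ← Finset.prod_div_distrib]
        apply Finset.prod_congr rfl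
        intro p hp
        have hp' := hO p ((hDP s hs).1 hp)
        have := (theT_sum K hK Om p hp'.1 hp'.2).2
        simp only [hφ, hp, if_true, this, hh]
        rw [div_div_eq_mul_div, mul_div_assoc]
      · have : ∃ p ∈ u, ¬ (p ∈ s ∧ p ∈ t) := by
          by_contra hcon
          push Not at hcon
          apply hst
          ext p
          constructor
          · intro hp; exact (hcon p (mem_union_left _ hp)).2
          · intro hp; exact (hcon p (mem_union_right _ hp)).1
        obtain ⟨p, hpu, hp⟩ := this
        apply Finset.prod_eq_zero hpu
        have hp' := hO p (huP p hpu)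
        have h0 := (theT_sum K hK Om p hp'.1 hp'.2).1
        rw [← h0]
        apply Finset.sum_congr rfl
        intro n _
        simp only [hφ]
        rcases mem_union.1 hpu with h1 | h1
        · have h2 : p ∉ t := fun h => hp ⟨h1, h⟩
          simp [h1, h2]
        · have h2 : p ∉ s := fun h => hp ⟨h, h1⟩
          simp [h1, h2]
    have hR0 : (0 : ℝ) ≤ R := Nat.cast_nonneg R
    have hmain := sum_periodic_le q X hq0 (fun n => th s n * th t n) (R * R) (by
        intro n
        refine (le_abs_self _).trans ?_
        rw [abs_mul]
        exact mul_le_mul (hthabs s hs n) (hthabs t ht n) (abs_nonneg _) hR0) (by positivity) (by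
        intro n
        simp only [hprod]
        exact prod_period u φ hφp n) (by
        rw [hsum]; split_ifs
        · exact div_nonneg (Nat.cast_nonneg _) (hh0 s hs).le
        · exact le_rfl)
    rw [hsum] at hmain
    have hhst : 0 ≤ h s * h t := mul_nonneg (hh0 s hs).le (hh0 t ht).le
    have hhst1 : h s * h t ≤ 1 := mul_le_one₀ (hh1 s hs) (hh0 t ht).le (hh1 t ht)
    refine (mul_le_mul_of_nonneg_left hmain hhst).trans ?_
    rw [mul_add]
    apply add_le_add
    · split_ifs with hst
      · subst hst
        have := hh0 s hs
        have : (0 : ℝ) < q := by exact_mod_cast hq0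
        apply le_of_eq
        field_simp
      · simp
    · have hqR' : (q : ℝ) ≤ R * R := by exact_mod_cast hqR
      calc h s * h t * (q * (R * R)) ≤ 1 * ((R * R) * (R * R)) := by gcongr
        _ = (R : ℝ) ^ 4 := by ring
  have hT : (#S : ℝ) * G ^ 2 ≤ ∑ n ∈ range X, (∑ s ∈ D, h s * th s n) ^ 2 := by
    calc (#S : ℝ) * G ^ 2 = ∑ n ∈ S, G ^ 2 := by simp
      _ = ∑ n ∈ S, (∑ s ∈ D, h s * th s n) ^ 2 := by
          apply Finset.sum_congr rfl
          intro n hn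
          congr 1
          rw [hG]
          apply Finset.sum_congr rfl
          intro s hs
          have : th s n = 1 := by
            apply Finset.prod_eq_one
            intro p hp
            rw [theT, if_neg (hSO n hn p ((hDP s hs).1 hp))]
          rw [this, mul_one]
      _ ≤ _ := Finset.sum_le_sum_of_subset_of_nonneg hS fun _ _ _ => sq_nonneg _
  have hexp : ∑ n ∈ range X, (∑ s ∈ D, h s * th s n) ^ 2 = 
      ∑ s ∈ D, ∑ t ∈ D, h s * h t * ∑ n ∈ range X, th s n * th t n := by
    simp_rw [sq, Finset.sum_mul_sum, Finset.mul_sum]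
    rw [Finset.sum_comm]
    apply Finset.sum_congr rfl
    intro s _
    rw [Finset.sum_comm]
    apply Finset.sum_congr rfl
    intro t _
    apply Finset.sum_congr rfl
    intro n _
    ring
  rw [hexp] at hT
  refine hT.trans ?_
  calc _ ≤ ∑ s ∈ D, ∑ t ∈ D, ((if s = t then X * h s else 0) + (R : ℝ) ^ 4) := 
        Finset.sum_le_sum fun s hs => Finset.sum_le_sum fun t ht => hcorr s hs t ht
    _ = X * G + #D * (#D * (R : ℝ) ^ 4) := by
        simp_rw [Finset.sum_add_distrib]
        congr 1
        · rw [hG, Finset.mul_sum]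
          apply Finset.sum_congr rfl
          intro s hs
          rw [Finset.sum_ite_eq, if_pos hs]
        · simp
    _ ≤ X * G + R * (R * (R : ℝ) ^ 4) := by
        have : (#D : ℝ) ≤ R := by exact_mod_cast hcardD
        gcongr
    _ = _ := by ring

lemma rankin (K : ℕ) (hK : 1 ≤ K) (W : ℕ) (hW : 2 ≤ W) (PP : Finset ℕ) (hP : ∀ p ∈ PP, p.Prime ∧ 2 * K ≤ p ∧ p ≤ W) :
    (∏ p ∈ PP, (1 + hh K p)) / 2 ≤ 
      ∑ s ∈ PP.powerset.filter (fun s => ∏ p ∈ s, p ≤ W ^ (12 * K + 1)), ∏ p ∈ s, hh K p := by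
  set R := W ^ (12 * K + 1) with hR
  have hWr : (2 : ℝ) ≤ W := by exact_mod_cast hW
  have hlog : 0 < Real.log W := Real.log_pos (by linarith)
  set ε := 1 / Real.log W with hε
  have hε0 : 0 < ε := by positivity
  have hh0 : ∀ p ∈ PP, 0 < hh K p := fun p hp => (hh_bd K hK p (hP p hp).2.1).1
  have hGt : ∏ p ∈ PP, (1 + hh K p) = ∑ s ∈ PP.powerset, ∏ p ∈ s, hh K p := by
    rw [Finset.prod_one_add]
  have hsplit := Finset.sum_filter_add_sum_filter_not PP.powerset (fun s => ∏ p ∈ s, p ≤ R) (fun s => ∏ p ∈ s, hh K p)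
  have hRe : (R : ℝ) ^ ε = Real.exp (12 * K + 1) := by
    rw [Real.rpow_def_of_pos (by rw [hR]; positivity), hR]
    push_cast
    rw [Real.log_pow, hε]
    congr 1
    push_cast
    field_simp
  have htail : ∑ s ∈ PP.powerset.filter (fun s => ¬ ∏ p ∈ s, p ≤ R), ∏ p ∈ s, hh K p ≤
      Real.exp (-(12 * K + 1)) * ∏ p ∈ PP, (1 + hh K p * (p : ℝ) ^ ε) := by
    rw [Finset.prod_one_add, Finset.mul_sum]
    calc _ ≤ ∑ s ∈ PP.powerset.filter (fun s => ¬ ∏ p ∈ s, p ≤ R), Real.exp (-(12 * K + 1)) * ∏ p ∈ s, (hh K p * (p : ℝ) ^ ε) := by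
          apply Finset.sum_le_sum
          intro s hs
          rw [mem_filter, mem_powerset, not_le] at hs
          rw [Finset.prod_mul_distrib, Real.finsetProd_rpow _ _ (fun p _ => Nat.cast_nonneg p)]
          have h1 : Real.exp (12 * K + 1) ≤ (∏ p ∈ s, (p : ℝ)) ^ ε := by
            rw [← hRe]
            apply Real.rpow_le_rpow (Nat.cast_nonneg _) _ hε0.le
            rw [← Nat.cast_prod]
            exact Nat.cast_le.2 hs.2.le
          have h2 : 0 ≤ ∏ p ∈ s, hh K p := Finset.prod_nonneg fun p hp => (hh0 p (hs.1 hp)).le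
          calc ∏ p ∈ s, hh K p = Real.exp (-(12 * K + 1)) * ((∏ p ∈ s, hh K p) * Real.exp (12 * K + 1)) := by
                rw [Real.exp_neg]; field_simp
            _ ≤ _ := by gcongr
      _ ≤ _ := by
          apply Finset.sum_le_sum_of_subset_of_nonneg (Finset.filter_subset _ _)
          intro s hs _
          rw [mem_powerset] at hs
          apply mul_nonneg (Real.exp_pos _).le
          exact Finset.prod_nonneg fun p hp => mul_nonneg (hh0 p (hs hp)).le (Real.rpow_nonneg (Nat.cast_nonneg _) _)
  have hfac : ∏ p ∈ PP, (1 + hh K p * (p : ℝ) ^ ε) ≤ Real.exp (12 * K) * ∏ p ∈ PP, (1 + hh K p) := by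
    have h1 : ∀ p ∈ PP, 1 + hh K p * (p : ℝ) ^ ε ≤ Real.exp (4 * K * ε * (Real.log p / p)) * (1 + hh K p) := by
      intro p hp
      have hp1 := hP p hp
      have hp0 : (1 : ℝ) ≤ p := by exact_mod_cast hp1.1.one_le
      have hlp : 0 ≤ Real.log p := Real.log_nonneg hp0
      have hu : Real.log p * ε ≤ 1 := by
        rw [hε, mul_one_div, div_le_one hlog]
        exact Real.log_le_log (by linarith) (by exact_mod_cast hp1.2.2)
      have hu0 : 0 ≤ Real.log p * ε := by positivity
      have h2 : (p : ℝ) ^ ε ≤ 1 + 2 * (Real.log p * ε) := by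
        rw [Real.rpow_def_of_pos (by linarith)]
        have := Real.abs_exp_sub_one_sub_id_le (x := Real.log p * ε) (by rw [abs_of_nonneg hu0]; exact hu)
        have := (abs_le.1 this).2
        nlinarith
      have hb := hh_bd K hK p hp1.2.1
      have h3 : hh K p * (2 * (Real.log p * ε)) ≤ 4 * K * ε * (Real.log p / p) := by
        calc _ ≤ (2 * K / p) * (2 * (Real.log p * ε)) := by
              apply mul_le_mul_of_nonneg_right hb.2.2; positivity
          _ = _ := by ring
      have h4 := Real.add_one_le_exp (4 * K * ε * (Real.log p / p))
      have h5 : 0 < hh K p := hb.1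
      calc 1 + hh K p * (p : ℝ) ^ ε ≤ 1 + hh K p * (1 + 2 * (Real.log p * ε)) := by gcongr
        _ ≤ (1 + 4 * K * ε * (Real.log p / p)) * 1 + hh K p := by linarith
        _ ≤ (4 * K * ε * (Real.log p / p) + 1) * (1 + hh K p) := by
            have : 0 ≤ 4 * K * ε * (Real.log p / p) * hh K p := by positivity
            nlinarith
        _ ≤ _ := by gcongr
    calc _ ≤ ∏ p ∈ PP, (Real.exp (4 * K * ε * (Real.log p / p)) * (1 + hh K p)) := 
          Finset.prod_le_prod (fun p hp => by have := hh0 p hp; positivity) h1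
      _ = Real.exp (4 * K * ε * ∑ p ∈ PP, Real.log p / p) * ∏ p ∈ PP, (1 + hh K p) := by
          rw [Finset.prod_mul_distrib, Finset.mul_sum, Real.exp_sum]
      _ ≤ _ := by
          apply mul_le_mul_of_nonneg_right _ (Finset.prod_nonneg fun p hp => by have := hh0 p hp; positivity)
          apply Real.exp_le_exp.2
          have h2 : ∑ p ∈ PP, Real.log p / p ≤ Real.log W + Real.log 4 := by
            refine le_trans ?_ (mertens_one W (by omega))
            apply Finset.sum_le_sum_of_subset_of_nonneg
            · intro p hp
              have := hP p hp
              rw [Nat.mem_primesBelow]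
              exact ⟨by omega, this.1⟩
            · intro p _ _
              exact div_nonneg (Real.log_natCast_nonneg _) (Nat.cast_nonneg _)
          have h3 : Real.log 4 ≤ 2 * Real.log W := by
            rw [show (4 : ℝ) = 2 ^ 2 by norm_num, Real.log_pow]; push_cast
            have := Real.log_le_log (by norm_num) hWr
            linarith
          calc _ ≤ 4 * K * ε * (3 * Real.log W) := by gcongr; linarith
            _ = 12 * K := by rw [hε]; field_simp; ring
  have hGpos : 0 ≤ ∏ p ∈ PP, (1 + hh K p) := Finset.prod_nonneg fun p hp => by have := hh0 p hp; positivity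
  have htail2 : Real.exp (-(12 * K + 1)) * ∏ p ∈ PP, (1 + hh K p * (p : ℝ) ^ ε) ≤ (∏ p ∈ PP, (1 + hh K p)) / 2 := by
    calc _ ≤ Real.exp (-(12 * K + 1)) * (Real.exp (12 * K) * ∏ p ∈ PP, (1 + hh K p)) := by gcongr
      _ = Real.exp (-1) * ∏ p ∈ PP, (1 + hh K p) := by
          rw [← mul_assoc, ← Real.exp_add]; congr 2; ring
      _ ≤ (1 / 2) * ∏ p ∈ PP, (1 + hh K p) := by
          gcongr
          rw [Real.exp_neg, one_div]
          apply inv_anti₀ (by norm_num)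
          have := Real.add_one_le_exp 1
          linarith
      _ = _ := by ring
  rw [hGt] at *
  linarith

lemma sieve (K : ℕ) (hK : 1 ≤ K) (W : ℕ) (hW : 2 ≤ W) (PP : Finset ℕ) (hP : ∀ p ∈ PP, p.Prime ∧ 2 * K ≤ p ∧ p ≤ W)
    (Om : ℕ → Finset ℕ) (hO : ∀ p ∈ PP, Om p ⊆ range p ∧ #(Om p) = K) (X : ℕ)
    (S : Finset ℕ) (hS : S ⊆ range X) (hSO : ∀ n ∈ S, ∀ p ∈ PP, n % p ∉ Om p) :
    (#S : ℝ) ≤ 2 * X * Real.exp (-(K * ∑ p ∈ PP, (1 : ℝ) / p)) + (W : ℝ) ^ (72 * K + 6) := by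
  have h1 := selberg K hK PP (fun p hp => ⟨(hP p hp).1, (hP p hp).2.1⟩) Om hO X (W ^ (12 * K + 1)) S hS hSO _ rfl _ rfl
  have h2 := rankin K hK W hW PP hP
  set G := ∑ s ∈ PP.powerset.filter (fun s => ∏ p ∈ s, p ≤ W ^ (12 * K + 1)), ∏ p ∈ s, hh K p with hG
  have hKr : (1 : ℝ) ≤ K := by exact_mod_cast hK
  have h3 : Real.exp (K * ∑ p ∈ PP, (1 : ℝ) / p) ≤ ∏ p ∈ PP, (1 + hh K p) := by
    rw [Finset.mul_sum, Real.exp_sum]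
    apply Finset.prod_le_prod (fun _ _ => (Real.exp_pos _).le)
    intro p hp
    have hp2 : 2 * (K : ℝ) ≤ p := by exact_mod_cast (hP p hp).2.1
    have h4 := Real.one_sub_le_exp_neg (K * (1 / (p : ℝ)))
    have h5 : 1 + hh K p = (1 - K * (1 / (p : ℝ)))⁻¹ := by
      have h7 : (0 : ℝ) < p - K := by linarith
      have h8 : (0 : ℝ) < p := by linarith
      rw [hh, show (1 - K * (1 / (p : ℝ))) = (p - K) / p by field_simp, inv_div]
      field_simp
      ring
    have h6 : 0 < 1 - K * (1 / (p : ℝ)) := by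
      rw [sub_pos, mul_one_div, div_lt_one (by linarith)]; linarith
    rw [h5, ← inv_inv (Real.exp _), ← Real.exp_neg]
    exact inv_anti₀ h6 h4
  have hE := Real.exp_pos (K * ∑ p ∈ PP, (1 : ℝ) / p)
  have hG1 : 1 ≤ G := by
    have : ∏ p ∈ (∅ : Finset ℕ), hh K p ≤ G := by
      apply Finset.single_le_sum (f := fun s => ∏ p ∈ s, hh K p)
      · intro s hs
        rw [mem_filter, mem_powerset] at hs
        exact Finset.prod_nonneg fun p hp => (hh_bd K hK p (hP p (hs.1 hp)).2.1).1.le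
      · simp only [mem_filter, mem_powerset, Finset.empty_subset, true_and, Finset.prod_empty]
        exact Nat.one_le_pow _ _ (by omega)
    simpa using this
  have h9 : (#S : ℝ) ≤ X / G + ((W ^ (12 * K + 1) : ℕ) : ℝ) ^ 6 := by
    have hR0 : (0 : ℝ) ≤ ((W ^ (12 * K + 1) : ℕ) : ℝ) ^ 6 := by positivity
    have : (#S : ℝ) * G ^ 2 ≤ (X / G + ((W ^ (12 * K + 1) : ℕ) : ℝ) ^ 6) * G ^ 2 := by
      rw [add_mul]
      have : (X : ℝ) / G * G ^ 2 = X * G := by field_simp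
      rw [this]
      have hG2 : 1 ≤ G ^ 2 := by nlinarith
      nlinarith
    exact le_of_mul_le_mul_right this (by positivity)
  refine h9.trans (add_le_add ?_ (le_of_eq ?_))
  · rw [Real.exp_neg, div_eq_mul_inv, mul_right_comm, mul_comm]
    apply mul_le_mul_of_nonneg_right _ (Nat.cast_nonneg X)
    rw [← div_eq_mul_inv, inv_eq_one_div, div_le_div_iff₀ (by linarith) hE]
    linarith
  · push_cast
    rw [← pow_mul]; ring

end

section
open Finset Filter

lemma bad_primes (N Z W κ : ℕ) (hN : 1 ≤ N) (hZ : Real.log N / 3 ≤ (Z : ℝ) + 1) (hZ3 : 3 ≤ Z) (Q : ℤ) (hQ : Q ≠ 0)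
    (hQN : |Q| ≤ (N : ℤ) ^ κ) :
    ∑ p ∈ (Nat.primesBelow (W + 1)).filter (fun p => Z < p ∧ (p : ℤ) ∣ Q), (1 : ℝ) / p ≤ 3 * κ := by
  set bad := (Nat.primesBelow (W + 1)).filter (fun p => Z < p ∧ (p : ℤ) ∣ Q) with hbad
  have h1 : ∏ p ∈ bad, p ∣ Q.natAbs := by
    apply Finset.prod_dvd_of_isRelPrime
    · intro p hp q hq hpq
      have hp' := Nat.prime_of_mem_primesBelow (mem_filter.1 hp).1
      have hq' := Nat.prime_of_mem_primesBelow (mem_filter.1 hq).1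
      exact Nat.coprime_iff_isRelPrime.1 ((Nat.coprime_primes hp' hq').2 hpq)
    · intro p hp
      exact Int.natCast_dvd.1 (mem_filter.1 hp).2.2
  have h2 : (Z + 1) ^ #bad ≤ N ^ κ := by
    calc (Z + 1) ^ #bad ≤ ∏ p ∈ bad, p := by
          apply Finset.pow_card_le_prod
          intro p hp
          exact (mem_filter.1 hp).2.1
      _ ≤ Q.natAbs := Nat.le_of_dvd (Int.natAbs_pos.2 hQ) h1
      _ ≤ N ^ κ := by
          zify
          exact hQN
  have h3 : (#bad : ℝ) ≤ κ * Real.log N := by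
    have h4 : Real.log (((Z + 1) ^ #bad : ℕ) : ℝ) ≤ Real.log ((N ^ κ : ℕ) : ℝ) := 
      Real.log_le_log (by positivity) (by exact_mod_cast h2)
    push_cast at h4
    rw [Real.log_pow, Real.log_pow] at h4
    have h5 : 1 ≤ Real.log ((Z : ℝ) + 1) := by
      rw [Real.le_log_iff_exp_le (by positivity)]
      have : (3 : ℝ) ≤ Z := by exact_mod_cast hZ3
      linarith [Real.exp_one_lt_d9]
    nlinarith [(Nat.cast_nonneg (#bad) : (0 : ℝ) ≤ #bad)]
  have hZ0 : (0 : ℝ) < (Z : ℝ) + 1 := by positivity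
  calc _ ≤ ∑ p ∈ bad, (1 : ℝ) / (Z + 1) := by
        apply Finset.sum_le_sum
        intro p hp
        apply one_div_le_one_div_of_le hZ0
        exact_mod_cast (mem_filter.1 hp).2.1
    _ = #bad / ((Z : ℝ) + 1) := by rw [sum_const, nsmul_eq_mul, mul_one_div]
    _ ≤ 3 * κ := by
        rw [div_le_iff₀ hZ0]
        have : (0 : ℝ) ≤ κ := Nat.cast_nonneg _
        nlinarith

lemma event (K : ℕ) (hK : 1 ≤ K) (H c : ℝ) (hH : 0 ≤ H) (hc : 0 ≤ c) : ∀ᶠ N : ℕ in atTop,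
    3 ≤ Real.log N / 3 ∧ 2 * K ≤ Real.log N / 3 ∧ 2 * H ^ 2 + 1 ≤ Real.log N / 3 ∧
    2 * H ^ 2 + 4 * H ^ 2 * c * N ≤ (N : ℝ) ^ 2 ∧ H ≤ N ∧ 
    2 ≤ (N : ℝ) ^ ((1 : ℝ) / (4 * (72 * K + 6))) ∧ 
    (Real.log N) ^ K ≤ (N : ℝ) ^ ((1 : ℝ) / 4) ∧ 1 ≤ Real.log (Real.log N) ∧ 1 ≤ N := by
  have hcast : Tendsto (fun N : ℕ => (N : ℝ)) atTop atTop := tendsto_natCast_atTop_atTop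
  have hlog : Tendsto (fun N : ℕ => Real.log N / 3) atTop atTop := 
    (Real.tendsto_log_atTop.comp hcast).atTop_div_const (by norm_num)
  have hll : Tendsto (fun N : ℕ => Real.log (Real.log N)) atTop atTop := 
    Real.tendsto_log_atTop.comp (Real.tendsto_log_atTop.comp hcast)
  have hrp : Tendsto (fun N : ℕ => (N : ℝ) ^ ((1 : ℝ) / (4 * (72 * K + 6)))) atTop atTop := 
    (tendsto_rpow_atTop (by positivity)).comp hcast
  have hlo : ∀ᶠ N : ℕ in atTop, (Real.log N) ^ K ≤ (N : ℝ) ^ ((1 : ℝ) / 4) := by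
    have h1 := (isLittleO_log_rpow_rpow_atTop (K : ℝ) (show (0 : ℝ) < 1 / 4 by norm_num)).bound (show (0 : ℝ) < 1 by norm_num)
    filter_upwards [hcast.eventually h1, eventually_ge_atTop 1] with N hN hN1
    rw [Real.rpow_natCast, one_mul] at hN
    refine (le_abs_self _).trans (hN.trans (le_of_eq ?_))
    exact Real.norm_of_nonneg (by positivity)
  filter_upwards [hlog.eventually_ge_atTop 3, hlog.eventually_ge_atTop (2 * K), hlog.eventually_ge_atTop (2 * H ^ 2 + 1),
    hcast.eventually_ge_atTop (2 * H ^ 2 + 4 * H ^ 2 * c), hcast.eventually_ge_atTop H, hrp.eventually_ge_atTop 2, hlo,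
    hll.eventually_ge_atTop 1, eventually_ge_atTop 1] with N h1 h2 h3 h4 h5 h6 h7 h8 h9
  refine ⟨h1, h2, h3, ?_, h5, h6, h7, h8, h9⟩
  have : (1 : ℝ) ≤ N := by exact_mod_cast h9
  nlinarith [sq_nonneg H]

lemma primor_le (N : ℕ) (hN : 1 ≤ N) : (primor (Real.log N / 3) : ℝ) ≤ (N : ℝ) ^ ((1 : ℝ) / 2) := by
  have hN0 : (1 : ℝ) ≤ N := by exact_mod_cast hN
  have hl : 0 ≤ Real.log N := Real.log_nonneg hN0
  have h1 : primor (Real.log N / 3) ≤ 4 ^ ⌊Real.log N / 3⌋₊ := primorial_le_four_pow _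
  calc (primor (Real.log N / 3) : ℝ) ≤ (4 : ℝ) ^ ⌊Real.log N / 3⌋₊ := by exact_mod_cast h1
    _ = (4 : ℝ) ^ (⌊Real.log N / 3⌋₊ : ℝ) := (Real.rpow_natCast _ _).symm
    _ ≤ (4 : ℝ) ^ (Real.log N / 3) := by
        apply Real.rpow_le_rpow_of_exponent_le (by norm_num)
        exact Nat.floor_le (by positivity)
    _ ≤ _ := by
        rw [Real.rpow_def_of_pos (by norm_num), Real.rpow_def_of_pos (by linarith)]
        apply Real.exp_le_exp.2
        have h8 : Real.log 4 ≤ 3 / 2 := by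
          rw [show (4 : ℝ) = 2 ^ 2 by norm_num, Real.log_pow]; push_cast
          linarith [Real.log_two_lt_d9]
        nlinarith

set_option maxHeartbeats 2000000 in
lemma main_sieve (k : ℕ) (hk : 1 ≤ k) (a b : Fin k → ℤ) (ha : ∀ i, a i ≠ 0)
    (F : ℤ → ℤ) (hF : ∀ n : ℤ, F n = ∏ i, (a i * n + b i))
    (hdisc : ∀ i j, i ≠ j → a i * b j - b i * a j ≠ 0) (l : ℕ) (hl : 1 ≤ l) (c : ℝ) (hc : 0 ≤ c) :
    ∃ C : ℝ, 0 < C ∧ ∀ᶠ N : ℕ in atTop, ∀ (b₀ P : ℕ), (N : ℝ) / (primor (Real.log N / 3) : ℝ) ≤ P →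
      (P : ℝ) ≤ 2 * c * N / (primor (Real.log N / 3) : ℝ) →
      ∀ T : Finset ℤ, #T = l → (∀ x ∈ T, ∀ y ∈ T, |x - y| ≤ 2 * (P : ℤ)) →
      ∀ S : Finset ℕ, S ⊆ range P →
      (∀ n ∈ S, ∀ x ∈ T, ∃ m ∈ SFset F N ((N : ℝ) ^ ((1 : ℝ) / (4 * k + 1))), 
        (m : ℤ) = b₀ + ((n : ℤ) - x) * primor (Real.log N / 3)) →
      (#S : ℝ) ≤ C * P * (Real.log (Real.log N) / Real.log N) ^ (k * l) := by
  set K := k * l with hKdef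
  have hK : 1 ≤ K := Nat.mul_pos hk hl
  set H : ℤ := (∏ i, |a i|) + ∑ i, (|a i| + |b i|) with hHdef
  have hHa : ∀ i, |a i| ≤ H := by
    intro i
    have h1 : |a i| + |b i| ≤ ∑ i, (|a i| + |b i|) := 
      Finset.single_le_sum (f := fun i => |a i| + |b i|) (fun i _ => by positivity) (mem_univ i)
    have h2 : 0 ≤ ∏ i, |a i| := Finset.prod_nonneg fun i _ => abs_nonneg _
    have := abs_nonneg (b i)
    linarith
  have hHb : ∀ i, |b i| ≤ H := by
    intro i
    have h1 : |a i| + |b i| ≤ ∑ i, (|a i| + |b i|) := 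
      Finset.single_le_sum (f := fun i => |a i| + |b i|) (fun i _ => by positivity) (mem_univ i)
    have h2 : 0 ≤ ∏ i, |a i| := Finset.prod_nonneg fun i _ => abs_nonneg _
    have := abs_nonneg (a i)
    linarith
  have hHp : ∏ i, |a i| ≤ H := by
    have : 0 ≤ ∑ i, (|a i| + |b i|) := Finset.sum_nonneg fun i _ => by positivity
    linarith
  have hH0 : 0 ≤ H := (Finset.prod_nonneg fun i _ => abs_nonneg (a i)).trans hHp
  set α : ℝ := (1 : ℝ) / (4 * (72 * K + 6)) with hα
  have hα0 : 0 < α := by positivity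
  set κ := 2 * (K * K) + 1 with hκ
  refine ⟨2 * (Real.exp (K * (5 + 3 * κ)) / α ^ K) + 1, by positivity, ?_⟩
  filter_upwards [event K hK (H : ℝ) c (by exact_mod_cast hH0) hc] with N hN
  obtain ⟨e1, e2, e3, e4, e5, e6, e7, e8, e9⟩ := hN
  intro b₀ P hP1 hP2 T hT hTd S hS hSm
  set M := primor (Real.log N / 3) with hM
  set Z := ⌊Real.log N / 3⌋₊ with hZ
  have hMZ : M = primorial Z := rfl
  have hNr : (1 : ℝ) ≤ N := by exact_mod_cast e9
  have hZle : (Z : ℝ) ≤ Real.log N / 3 := Nat.floor_le (by linarith)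
  have hZ3 : 3 ≤ Z := Nat.le_floor (by exact_mod_cast e1)
  have hZK : 2 * K ≤ Z := Nat.le_floor (by exact_mod_cast e2)
  have hZlt : Real.log N / 3 ≤ (Z : ℝ) + 1 := (Nat.lt_floor_add_one _).le
  have hMZ' : Z < M := by rw [hMZ]; exact lt_primorial_self (by omega)
  have hM0 : 0 < M := by omega
  have hM0r : (0 : ℝ) < M := by exact_mod_cast hM0
  have hMH : 2 * H ^ 2 < (M : ℤ) := by
    have h1 : (Z : ℝ) < M := by exact_mod_cast hMZ'
    have h2 : 2 * (H : ℝ) ^ 2 < M := by linarith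
    exact_mod_cast h2
  set W := ⌊(N : ℝ) ^ α⌋₊ with hW
  have hW2 : 2 ≤ W := Nat.le_floor (by push_cast; exact e6)
  have hWle : (W : ℝ) ≤ (N : ℝ) ^ α := Nat.floor_le (by positivity)
  have hWlt : (N : ℝ) ^ α ≤ (W : ℝ) + 1 := (Nat.lt_floor_add_one _).le
  -- index set
  set I : Finset (Fin k × ℤ) := (univ : Finset (Fin k)) ×ˢ T with hI
  have hIc : #I = K := by rw [hI, card_product, card_univ, Fintype.card_fin, hT]
  set E : Fin k × ℤ → Fin k × ℤ → ℤ := fun x y => if x = y then 1 else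
    a x.1 * b y.1 - b x.1 * a y.1 + a x.1 * a y.1 * M * (x.2 - y.2) with hE
  have habs : ∀ i j, |a i * b j - b i * a j| ≤ 2 * H ^ 2 := by
    intro i j
    calc |a i * b j - b i * a j| ≤ |a i * b j| + |b i * a j| := abs_sub _ _
      _ = |a i| * |b j| + |b i| * |a j| := by rw [abs_mul, abs_mul]
      _ ≤ H * H + H * H := add_le_add (mul_le_mul (hHa i) (hHb j) (abs_nonneg _) hH0) 
            (mul_le_mul (hHb i) (hHa j) (abs_nonneg _) hH0)
      _ = _ := by ring
  have hE0 : ∀ x ∈ I, ∀ y ∈ I, E x y ≠ 0 := by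
    intro x hx y hy
    simp only [hE]
    split_ifs with hxy
    · exact one_ne_zero
    by_cases h2 : x.2 = y.2
    · rw [h2, sub_self, mul_zero, add_zero]
      apply hdisc
      intro h1
      exact hxy (Prod.ext h1 h2)
    · intro h0
      have h3 : a x.1 * a y.1 * M * (x.2 - y.2) = -(a x.1 * b y.1 - b x.1 * a y.1) := by linarith
      have h4 : (M : ℤ) ≤ |a x.1 * a y.1 * M * (x.2 - y.2)| := by
        have h5 : a x.1 * a y.1 * M * (x.2 - y.2) = M * (a x.1 * a y.1 * (x.2 - y.2)) := by ring
        rw [h5, abs_mul, Nat.abs_cast]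
        have h6 : a x.1 * a y.1 * (x.2 - y.2) ≠ 0 := 
          mul_ne_zero (mul_ne_zero (ha _) (ha _)) (sub_ne_zero.2 h2)
        have h7 := Int.one_le_abs h6
        have : (0 : ℤ) ≤ M := Nat.cast_nonneg _
        nlinarith
      rw [h3, abs_neg] at h4
      have := habs x.1 y.1
      linarith
  have hMP : (M : ℤ) * (2 * P) * H ^ 2 + 2 * H ^ 2 ≤ (N : ℤ) ^ 2 := by
    have h1 : (P : ℝ) * M ≤ 2 * c * N := by rwa [le_div_iff₀ hM0r] at hP2
    have h2 : (M : ℝ) * (2 * P) * (H : ℝ) ^ 2 + 2 * (H : ℝ) ^ 2 ≤ (N : ℝ) ^ 2 := by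
      refine le_trans ?_ e4
      nlinarith [sq_nonneg (H : ℝ)]
    exact_mod_cast h2
  have hN1 : (1 : ℤ) ≤ N := by exact_mod_cast e9
  have hEabs : ∀ x ∈ I, ∀ y ∈ I, |E x y| ≤ (N : ℤ) ^ 2 := by
    intro x hx y hy
    simp only [hE]
    split_ifs with hxy
    · rw [abs_one]; exact one_le_pow₀ hN1
    · refine le_trans ?_ hMP
      have hd := hTd x.2 (mem_product.1 hx).2 y.2 (mem_product.1 hy).2
      calc _ ≤ |a x.1 * b y.1 - b x.1 * a y.1| + |a x.1 * a y.1 * M * (x.2 - y.2)| := abs_add_le _ _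
        _ ≤ 2 * H ^ 2 + H * H * M * (2 * P) := by
            apply add_le_add (habs _ _)
            rw [abs_mul, abs_mul, abs_mul, Nat.abs_cast]
            have hMn : (0 : ℤ) ≤ M := Nat.cast_nonneg _
            have hm := mul_le_mul (hHa x.1) (hHa y.1) (abs_nonneg _) hH0
            gcongr
        _ = _ := by ring
  set Q : ℤ := (∏ i, a i) * ∏ z ∈ I ×ˢ I, E z.1 z.2 with hQ
  have hQ0 : Q ≠ 0 := by
    apply mul_ne_zero (Finset.prod_ne_zero_iff.2 fun i _ => ha i)
    apply Finset.prod_ne_zero_iff.2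
    intro z hz
    exact hE0 _ (mem_product.1 hz).1 _ (mem_product.1 hz).2
  have hQN : |Q| ≤ (N : ℤ) ^ κ := by
    have hHN : H ≤ N := by exact_mod_cast e5
    rw [hQ, abs_mul, Finset.abs_prod, Finset.abs_prod, hκ, pow_succ, mul_comm, pow_mul]
    apply mul_le_mul _ (hHp.trans hHN) (Finset.prod_nonneg fun i _ => abs_nonneg (a i)) (by positivity)
    calc ∏ z ∈ I ×ˢ I, |E z.1 z.2| ≤ ∏ z ∈ I ×ˢ I, (N : ℤ) ^ 2 := 
          Finset.prod_le_prod (fun _ _ => abs_nonneg _) fun z hz => hEabs _ (mem_product.1 hz).1 _ (mem_product.1 hz).2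
      _ = _ := by rw [prod_const, card_product, hIc]
  set PP := (Nat.primesBelow (W + 1)).filter (fun p => Z < p ∧ ¬ (p : ℤ) ∣ Q) with hPP
  have hPPm : ∀ p ∈ PP, p.Prime ∧ p ≤ W ∧ Z < p ∧ ¬ (p : ℤ) ∣ Q := by
    intro p hp
    rw [hPP, mem_filter, Nat.mem_primesBelow] at hp
    exact ⟨hp.1.2, by omega, hp.2.1, hp.2.2⟩
  -- roots
  have hroot : ∀ (p : ℕ) (x : Fin k × ℤ), ∃ n : ℕ, p ∈ PP → 
      n < p ∧ (p : ℤ) ∣ a x.1 * (b₀ + ((n : ℤ) - x.2) * M) + b x.1 := by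
    intro p x
    by_cases hp : p ∈ PP
    swap
    · exact ⟨0, fun h => absurd h hp⟩
    obtain ⟨hpp, hpW, hpZ, hpQ⟩ := hPPm p hp
    have hpi : Prime (p : ℤ) := Nat.prime_iff_prime_int.1 hpp
    have hpa : ¬ (p : ℤ) ∣ a x.1 := by
      intro h
      apply hpQ
      exact Dvd.dvd.mul_right (h.trans (Finset.dvd_prod_of_mem _ (mem_univ _))) _
    have hpM : ¬ (p : ℤ) ∣ M := by
      rw [Int.natCast_dvd_natCast, hMZ, hpp.dvd_primorial_iff]
      omega
    have hpaM : ¬ (p : ℤ) ∣ a x.1 * M := fun h => (hpi.dvd_or_dvd h).elim hpa hpM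
    have hcop : IsCoprime (p : ℤ) (a x.1 * M) := (hpi.coprime_iff_not_dvd).2 hpaM
    obtain ⟨u, v, huv⟩ := hcop
    set t : ℤ := -(v * (a x.1 * (b₀ - x.2 * M) + b x.1)) with ht
    have hp0 : (0 : ℤ) < p := by exact_mod_cast hpp.pos
    refine ⟨(t % p).toNat, fun _ => ⟨?_, ?_⟩⟩
    · have := Int.emod_lt_of_pos t hp0
      have h0 := Int.emod_nonneg t hp0.ne'
      omega
    · rw [Int.toNat_of_nonneg (Int.emod_nonneg t hp0.ne')]
      have h1 : t % p = t - p * (t / p) := by rw [Int.emod_def]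
      rw [h1]
      refine ⟨u * (a x.1 * (b₀ - x.2 * M) + b x.1) - a x.1 * M * (t / p), ?_⟩
      have h2 : v * (a x.1 * M) = 1 - u * p := by linarith
      have h3 : a x.1 * M * t = -((1 - u * p) * (a x.1 * (b₀ - x.2 * M) + b x.1)) := by
        rw [ht, ← h2]; ring
      linear_combination h3
  choose r hr using hroot
  have hsv := sieve K hK W hW2 PP (fun p hp => by
      obtain ⟨hpp, hpW, hpZ, hpQ⟩ := hPPm p hp
      exact ⟨hpp, by omega, hpW⟩) (fun p => I.image (r p)) (by
      intro p hp
      obtain ⟨hpp, hpW, hpZ, hpQ⟩ := hPPm p hp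
      constructor
      · intro n hn
        obtain ⟨x, hx, rfl⟩ := mem_image.1 hn
        exact mem_range.2 (hr p x hp).1
      · rw [← hIc]
        apply Finset.card_image_of_injOn
        intro x hx y hy hxy
        by_contra hne
        have h1 := (hr p x hp).2
        have h2 := (hr p y hp).2
        rw [← hxy] at h2
        apply hpQ
        apply Dvd.dvd.mul_left
        have h3 : (p : ℤ) ∣ E x y := by
          simp only [hE, if_neg hne]
          have h4 := dvd_sub (h2.mul_left (a x.1)) (h1.mul_left (a y.1))
          refine h4.trans (dvd_of_eq ?_)
          ring
        exact h3.trans (Finset.dvd_prod_of_mem (fun z : (Fin k × ℤ) × (Fin k × ℤ) => E z.1 z.2) (mem_product.2 ⟨hx, hy⟩ : (x, y) ∈ I ×ˢ I))) P S hS (by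
      intro n hn p hp hmem
      obtain ⟨hpp, hpW, hpZ, hpQ⟩ := hPPm p hp
      obtain ⟨x, hx, hxn⟩ := mem_image.1 hmem
      have h1 := (hr p x hp).2
      rw [hxn] at h1
      obtain ⟨m, hm, hmn⟩ := hSm n hn x.2 (mem_product.1 hx).2
      have h2 : (p : ℤ) ∣ a x.1 * m + b x.1 := by
        rw [hmn]
        have h3 : ((n % p : ℕ) : ℤ) = n - p * (n / p : ℕ) := by
          have := Nat.mod_add_div n p
          zify at this ⊢
          linarith
        rw [h3] at h1
        have h4 : a x.1 * (b₀ + ((n : ℤ) - x.2) * M) + b x.1 = (a x.1 * (↑b₀ + ((n : ℤ) - p * (n / p : ℕ) - x.2) * M) + b x.1) + p * (a x.1 * M * (n / p : ℕ)) := by ring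
        rw [h4]
        exact dvd_add h1 (dvd_mul_right _ _)
      rw [SFset, mem_filter] at hm
      have h5 : (p : ℤ) ∣ F m := by
        rw [hF]
        exact h2.trans (Finset.dvd_prod_of_mem (fun i => a i * (m : ℤ) + b i) (mem_univ x.1))
      have h6 : (p : ℤ) ∣ (primor ((N : ℝ) ^ ((1 : ℝ) / (4 * k + 1))) : ℕ) := by
        rw [Int.natCast_dvd_natCast]
        refine hpp.dvd_primorial_iff.2 ?_
        apply Nat.le_floor
        calc (p : ℝ) ≤ W := by exact_mod_cast hpW
          _ ≤ (N : ℝ) ^ α := hWle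
          _ ≤ _ := by
            apply Real.rpow_le_rpow_of_exponent_le hNr
            rw [hα]
            apply one_div_le_one_div_of_le (by positivity)
            have : k ≤ K := Nat.le_mul_of_pos_right _ hl
            have : (k : ℝ) ≤ K := by exact_mod_cast this
            have : (0 : ℝ) ≤ k := by positivity
            linarith
      have h7 := Int.dvd_coe_gcd h5 h6
      rw [hm.2] at h7
      have h8 : p ∣ 1 := by exact_mod_cast h7
      exact hpp.one_lt.ne' (Nat.dvd_one.1 h8))
  -- Mertens
  have hsum : Real.log (Real.log ((W + 1 : ℕ) : ℝ)) - Real.log (Real.log Z) - (5 + 3 * κ) ≤ ∑ p ∈ PP, (1 : ℝ) / p := by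
    have m1 := mertens_two_lower W (by omega)
    have m2 := mertens_two_upper Z hZ3
    have m3 := bad_primes N Z W κ e9 hZlt hZ3 Q hQ0 hQN
    have m4 : ∑ p ∈ Nat.primesBelow (W + 1), (1 : ℝ) / p ≤ ∑ p ∈ PP, (1 : ℝ) / p + 
        (∑ p ∈ Nat.primesBelow (Z + 1), (1 : ℝ) / p + 
        ∑ p ∈ (Nat.primesBelow (W + 1)).filter (fun p => Z < p ∧ (p : ℤ) ∣ Q), (1 : ℝ) / p) := by
      have hsub : Nat.primesBelow (W + 1) ⊆ PP ∪ (Nat.primesBelow (Z + 1) ∪ 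
          (Nat.primesBelow (W + 1)).filter (fun p => Z < p ∧ (p : ℤ) ∣ Q)) := by
        intro p hp
        simp only [hPP, mem_union, mem_filter, hp, true_and, Nat.mem_primesBelow]
        have := (Nat.mem_primesBelow.1 hp).2
        by_cases h1 : Z < p
        · by_cases h2 : (p : ℤ) ∣ Q
          · exact Or.inr (Or.inr ⟨h1, h2⟩)
          · exact Or.inl ⟨h1, h2⟩
        · exact Or.inr (Or.inl ⟨by omega, this⟩)
      have hu : ∀ s t : Finset ℕ, ∑ p ∈ s ∪ t, (1 : ℝ) / p ≤ ∑ p ∈ s, (1 : ℝ) / p + ∑ p ∈ t, (1 : ℝ) / p := by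
        intro s t
        rw [← Finset.sum_union_inter]
        have : 0 ≤ ∑ p ∈ s ∩ t, (1 : ℝ) / p := Finset.sum_nonneg fun _ _ => by positivity
        linarith
      calc _ ≤ _ := Finset.sum_le_sum_of_subset_of_nonneg hsub fun _ _ _ => by positivity
        _ ≤ _ := hu _ _
        _ ≤ _ := by gcongr; exact hu _ _
    linarith
  have hlogN : 9 ≤ Real.log N := by linarith
  have hlogZ : 0 < Real.log Z := Real.log_pos (by exact_mod_cast (by omega : 1 < Z))
  have hlogZ' : Real.log Z ≤ Real.log (Real.log N) := Real.log_le_log (by positivity) (by linarith)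
  have hlogW : α * Real.log N ≤ Real.log ((W + 1 : ℕ) : ℝ) := by
    rw [← Real.log_rpow (by linarith)]
    apply Real.log_le_log (by positivity)
    push_cast; exact hWlt
  have hαN : 0 < α * Real.log N := by positivity
  have hlogW0 : 0 < Real.log ((W + 1 : ℕ) : ℝ) := by linarith
  have hexp : Real.exp (-(K * ∑ p ∈ PP, (1 : ℝ) / p)) ≤ 
      Real.exp (K * (5 + 3 * κ)) / α ^ K * (Real.log (Real.log N) / Real.log N) ^ K := by
    calc _ ≤ Real.exp (K * (5 + 3 * κ) + K * (Real.log (Real.log Z) - Real.log (Real.log ((W + 1 : ℕ) : ℝ)))) := by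
          apply Real.exp_le_exp.2
          have : (0 : ℝ) ≤ K := Nat.cast_nonneg _
          nlinarith
      _ = Real.exp (K * (5 + 3 * κ)) * (Real.log Z / Real.log ((W + 1 : ℕ) : ℝ)) ^ K := by
          rw [Real.exp_add, Real.exp_nat_mul (_ - _), Real.exp_sub, Real.exp_log hlogZ, Real.exp_log hlogW0]
      _ ≤ Real.exp (K * (5 + 3 * κ)) * (Real.log (Real.log N) / (α * Real.log N)) ^ K := by
          gcongr
      _ = _ := by
          rw [div_pow (Real.log (Real.log N)), div_pow (Real.log (Real.log N)), mul_pow, div_mul_div_comm, mul_div_assoc]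
  have herr : (W : ℝ) ^ (72 * K + 6) ≤ P * (Real.log (Real.log N) / Real.log N) ^ K := by
    have h1 : (W : ℝ) ^ (72 * K + 6) ≤ (N : ℝ) ^ ((1 : ℝ) / 4) := by
      calc (W : ℝ) ^ (72 * K + 6) ≤ ((N : ℝ) ^ α) ^ (72 * K + 6) := by gcongr
        _ = (N : ℝ) ^ ((1 : ℝ) / 4) := by
          rw [← Real.rpow_natCast, ← Real.rpow_mul (by linarith)]
          congr 1
          rw [hα]; push_cast
          field_simp
    have h2 : (N : ℝ) ^ ((1 : ℝ) / 2) ≤ P := by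
      refine le_trans ?_ hP1
      rw [le_div_iff₀ hM0r]
      calc _ ≤ (N : ℝ) ^ ((1 : ℝ) / 2) * (N : ℝ) ^ ((1 : ℝ) / 2) := by
            gcongr; exact primor_le N e9
        _ = N := by rw [← Real.rpow_add (by linarith)]; norm_num
    have h3 : (1 / Real.log N) ^ K ≤ (Real.log (Real.log N) / Real.log N) ^ K := by gcongr
    calc _ ≤ (N : ℝ) ^ ((1 : ℝ) / 4) := h1
      _ ≤ (N : ℝ) ^ ((1 : ℝ) / 2) * (1 / Real.log N) ^ K := by
          rw [one_div_pow, mul_one_div, le_div_iff₀ (by positivity)]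
          calc _ ≤ (N : ℝ) ^ ((1 : ℝ) / 4) * (N : ℝ) ^ ((1 : ℝ) / 4) := by gcongr
            _ = _ := by rw [← Real.rpow_add (by linarith)]; norm_num
      _ ≤ _ := by gcongr
  calc (#S : ℝ) ≤ _ := hsv
    _ ≤ 2 * P * (Real.exp (K * (5 + 3 * κ)) / α ^ K * (Real.log (Real.log N) / Real.log N) ^ K) + P * (Real.log (Real.log N) / Real.log N) ^ K := by
        gcongr
    _ = _ := by ring

end

section
open Finset Filter

lemma pow_le_desc (x l : ℕ) : x ^ l ≤ 2 ^ l * x.descFactorial l + (2 * l) ^ l := by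
  by_cases h : x ≤ 2 * l
  · exact (Nat.pow_le_pow_left h l).trans (Nat.le_add_left _ _)
  · refine le_trans ?_ (Nat.le_add_right _ _)
    calc x ^ l ≤ (2 * (x + 1 - l)) ^ l := Nat.pow_le_pow_left (by omega) l
      _ = 2 ^ l * (x + 1 - l) ^ l := mul_pow _ _ _
      _ ≤ _ := Nat.mul_le_mul_left _ (Nat.pow_sub_le_descFactorial _ _)

lemma choose_count {α : Type*} [DecidableEq α] (P l : ℕ) (Bt : Finset α) (rel : ℕ → α → Prop) 
    (R : ℝ)
    (h : ∀ T ⊆ Bt, #T = l → ∀ S : Finset ℕ, S ⊆ range P → (∀ n ∈ S, ∀ x ∈ T, rel n x) → (#S : ℝ) ≤ R) :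
    letI := Classical.propDecidable
    ∑ m ∈ range P, ((#(Bt.filter (fun x => rel m x))).choose l : ℝ) ≤ ((#Bt).choose l : ℝ) * R := by
  classical
  have h1 : ∀ m, ((#(Bt.filter (fun x => rel m x))).choose l : ℝ) = 
      ∑ T ∈ powersetCard l Bt, if (∀ x ∈ T, rel m x) then (1 : ℝ) else 0 := by
    intro m
    rw [← card_powersetCard, Finset.sum_boole]
    congr 2
    ext T
    simp only [mem_powersetCard, mem_filter, subset_iff]
    constructor
    · rintro ⟨h1, h2⟩
      exact ⟨⟨fun x hx => (h1 hx).1, h2⟩, fun x hx => (h1 hx).2⟩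
    · rintro ⟨⟨h1, h2⟩, h3⟩
      exact ⟨fun x hx => ⟨h1 hx, h3 x hx⟩, h2⟩
  have h2 : ∑ m ∈ range P, ((#(Bt.filter (fun x => rel m x))).choose l : ℝ) ≤ ((#Bt).choose l : ℝ) * R := by
    simp_rw [h1]
    rw [Finset.sum_comm, ← card_powersetCard, ← nsmul_eq_mul]
    apply Finset.sum_le_card_nsmul
    intro T hT
    rw [Finset.sum_boole]
    rw [mem_powersetCard] at hT
    exact h T hT.1 hT.2 _ (filter_subset _ _) fun n hn => (mem_filter.1 hn).2
  convert h2

lemma moment (P l : ℕ) [NeZero P] (As : Finset ℕ) (hAs : ∀ a ∈ As, a ≤ P) (B : Finset (ZMod P)) (R : ℝ) (hR : 0 ≤ R)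
    (h : ∀ T : Finset ℤ, #T = l → (∀ x ∈ T, ∀ y ∈ T, |x - y| ≤ 2 * (P : ℤ)) → 
      ∀ S : Finset ℕ, S ⊆ range P → (∀ n ∈ S, ∀ x ∈ T, ∃ a ∈ As, (a : ℤ) = (n : ℤ) - x) → (#S : ℝ) ≤ R) :
    ∑ n : ZMod P, (#(B.filter (fun y => n - y ∈ As.image (fun a : ℕ => (a : ZMod P)))) : ℝ) ^ l ≤ 
      2 ^ l * (2 * #B : ℝ) ^ l * R + (2 * l : ℝ) ^ l * P := by
  classical
  have hP0 : 0 < P := Nat.pos_of_ne_zero (NeZero.ne P)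
  set Bt : Finset ℤ := B.image (fun y => (y.val : ℤ)) ∪ B.image (fun y => (y.val : ℤ) - P) with hBt
  have hBtc : #Bt ≤ 2 * #B := by
    calc #Bt ≤ _ := card_union_le _ _
      _ ≤ #B + #B := add_le_add card_image_le card_image_le
      _ = _ := by ring
  have hBtr : ∀ x ∈ Bt, -(P : ℤ) ≤ x ∧ x < P := by
    intro x hx
    rw [hBt, mem_union, mem_image, mem_image] at hx
    rcases hx with ⟨y, _, rfl⟩ | ⟨y, _, rfl⟩ <;> have := ZMod.val_lt y <;> omega
  set rel : ℕ → ℤ → Prop := fun n x => ∃ a ∈ As, (a : ℤ) = (n : ℤ) - x with hrel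
  set xt : ℕ → ℕ := fun m => #(Bt.filter (fun x => rel m x)) with hxt
  have hle : ∀ n : ZMod P, #(B.filter (fun y => n - y ∈ As.image (fun a : ℕ => (a : ZMod P)))) ≤ xt n.val := by
    intro n
    apply Finset.card_le_card_of_injOn (fun y => if rel n.val y.val then (y.val : ℤ) else (y.val : ℤ) - P)
    · intro y hy
      have hy := mem_filter.1 hy
      obtain ⟨hyB, hyA⟩ := hy
      obtain ⟨a, haA, hay⟩ := mem_image.1 hyA
      refine mem_coe.2 (mem_filter.2 ?_)
      dsimp only
      split_ifs with hr
      · exact ⟨mem_union_left _ (mem_image_of_mem _ hyB), hr⟩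
      · refine ⟨mem_union_right _ (mem_image_of_mem (fun y : ZMod P => (y.val : ℤ) - P) hyB), a, haA, ?_⟩
        have h1 : (((a : ℤ) - n.val + y.val : ℤ) : ZMod P) = 0 := by
          push_cast
          rw [ZMod.natCast_zmod_val, ZMod.natCast_zmod_val, hay]; ring
        rw [ZMod.intCast_zmod_eq_zero_iff_dvd] at h1
        obtain ⟨t, ht⟩ := h1
        have h2 := ZMod.val_lt n
        have h3 := ZMod.val_lt y
        have h4 := hAs a haA
        have hP0' : (0 : ℤ) < P := by exact_mod_cast hP0
        have t1 : t < 2 := by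
          by_contra hc
          push Not at hc
          have : (P : ℤ) * 2 ≤ P * t := by gcongr
          omega
        have t0 : -1 < t := by
          by_contra hc
          push Not at hc
          have : (P : ℤ) * t ≤ P * (-1) := by gcongr
          omega
        have t2 : t = 0 ∨ t = 1 := by omega
        rcases t2 with rfl | rfl
        · exact absurd ⟨a, haA, by omega⟩ hr
        · omega
    · intro y _ z _ hyz
      have h1 := congrArg (fun w : ℤ => (w : ZMod P)) hyz
      dsimp only at h1
      split_ifs at h1 <;> simpa using h1
  have hch : ∑ m ∈ range P, ((xt m).choose l : ℝ) ≤ ((#Bt).choose l : ℝ) * R := by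
    have := choose_count P l Bt rel R (fun T hT hTl S hS hS' => h T hTl (by
      intro x hx y hy
      have h1 := hBtr x (hT hx)
      have h2 := hBtr y (hT hy)
      rw [abs_le]; constructor <;> linarith) S hS hS')
    convert this
  have hsum : ∀ g : ℕ → ℝ, ∑ n : ZMod P, g n.val = ∑ m ∈ range P, g m := by
    intro g
    apply Finset.sum_nbij ZMod.val
    · intro n _; exact mem_range.2 (ZMod.val_lt n)
    · intro x _ y _ hxy; exact ZMod.val_injective P hxy
    · intro m hm
      refine ⟨(m : ZMod P), by simp, ZMod.val_cast_of_lt (by simpa using hm)⟩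
    · intro _ _; rfl
  calc _ ≤ ∑ n : ZMod P, (xt n.val : ℝ) ^ l := by
        apply Finset.sum_le_sum
        intro n _
        have : (#(B.filter (fun y => n - y ∈ As.image (fun a : ℕ => (a : ZMod P)))) : ℝ) ≤ xt n.val := by
          exact_mod_cast hle n
        gcongr
    _ = ∑ m ∈ range P, (xt m : ℝ) ^ l := hsum fun m => (xt m : ℝ) ^ l
    _ ≤ ∑ m ∈ range P, (2 ^ l * (l.factorial * ((xt m).choose l : ℝ)) + (2 * l : ℝ) ^ l) := by
        apply Finset.sum_le_sum
        intro m _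
        have := pow_le_desc (xt m) l
        rw [Nat.descFactorial_eq_factorial_mul_choose] at this
        exact_mod_cast this
    _ = 2 ^ l * (l.factorial * ∑ m ∈ range P, ((xt m).choose l : ℝ)) + (2 * l : ℝ) ^ l * P := by
        rw [sum_add_distrib, ← mul_sum, ← mul_sum, sum_const, card_range, nsmul_eq_mul]; ring
    _ ≤ 2 ^ l * (l.factorial * (((#Bt).choose l : ℝ) * R)) + (2 * l : ℝ) ^ l * P := by
        gcongr
    _ = 2 ^ l * (((l.factorial * (#Bt).choose l : ℕ) : ℝ) * R) + (2 * l : ℝ) ^ l * P := by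
        push_cast; ring
    _ ≤ 2 ^ l * ((2 * #B : ℝ) ^ l * R) + (2 * l : ℝ) ^ l * P := by
        gcongr
        rw [← Nat.descFactorial_eq_factorial_mul_choose]
        have : (#Bt).descFactorial l ≤ (2 * #B) ^ l := (Nat.descFactorial_le_pow _ _).trans (Nat.pow_le_pow_left hBtc l)
        exact_mod_cast this
    _ = _ := by ring

lemma level (P : ℕ) [NeZero P] (f : ZMod P → ℝ) (hs : ∑ n, f n = P)
    (l : ℕ) (hl : 2 ≤ l) (δ C : ℝ) (hδ : 0 < δ) (hC : 1 ≤ C) (hf : ∀ n, 0 ≤ f n)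
    (hm : ∑ n, f n ^ l ≤ C * P / δ ^ l) :
    1 / (2 ^ l * C) * δ ^ ((l : ℝ) / ((l : ℝ) - 1)) * P ≤ (#(univ.filter (fun n => 1 / 2 ≤ f n)) : ℝ) := by
  have hP0 : 0 < P := Nat.pos_of_ne_zero (NeZero.ne P)
  have hP : (0 : ℝ) < P := by exact_mod_cast hP0
  set D := univ.filter (fun n => 1 / 2 ≤ f n) with hD
  have h1 : (P : ℝ) / 2 ≤ ∑ n ∈ D, f n := by
    have h2 := Finset.sum_filter_add_sum_filter_not univ (fun n => 1 / 2 ≤ f n) f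
    have h3 : ∑ n ∈ univ.filter (fun n => ¬ 1 / 2 ≤ f n), f n ≤ P * (1 / 2) := by
      calc _ ≤ ∑ n ∈ univ.filter (fun n => ¬ 1 / 2 ≤ f n), (1 / 2 : ℝ) := by
            apply Finset.sum_le_sum
            intro n hn
            exact (not_le.1 (mem_filter.1 hn).2).le
        _ ≤ ∑ n : ZMod P, (1 / 2 : ℝ) := by
            apply Finset.sum_le_sum_of_subset_of_nonneg (subset_univ _)
            intros; norm_num
        _ = _ := by rw [sum_const, card_univ, ZMod.card, nsmul_eq_mul]
    rw [hs] at h2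
    linarith
  have hD0 : 0 < #D := by
    rw [Finset.card_pos]
    by_contra h
    rw [not_nonempty_iff_eq_empty] at h
    rw [h, sum_empty] at h1
    linarith
  have hDr : (0 : ℝ) < #D := by exact_mod_cast hD0
  obtain ⟨m, rfl⟩ : ∃ m, l = m + 2 := ⟨l - 2, by omega⟩
  have h4 := pow_sum_div_card_le_sum_pow (s := D) (f := f) (fun n _ => hf n) (m + 1)
  have h5 : ∑ n ∈ D, f n ^ (m + 2) ≤ C * P / δ ^ (m + 2) := by
    refine le_trans ?_ hm
    exact Finset.sum_le_sum_of_subset_of_nonneg (subset_univ _) fun n _ _ => pow_nonneg (hf n) _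
  have h6 : ((P : ℝ) / 2) ^ (m + 2) ≤ #D ^ (m + 1) * (C * P / δ ^ (m + 2)) := by
    calc ((P : ℝ) / 2) ^ (m + 2) ≤ (∑ n ∈ D, f n) ^ (m + 2) := by gcongr
      _ ≤ _ := by
        rw [div_le_iff₀ (by positivity)] at h4
        rw [mul_comm]
        exact h4.trans (by gcongr)
  have hC0 : 0 < C := by linarith
  apply le_of_pow_le_pow_left₀ (n := m + 1) (by omega) hDr.le
  have hδp : (δ ^ (((m + 2 : ℕ) : ℝ) / (((m + 2 : ℕ) : ℝ) - 1))) ^ (m + 1) = δ ^ (m + 2) := by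
    rw [← Real.rpow_natCast, ← Real.rpow_mul hδ.le, ← Real.rpow_natCast δ]
    congr 1
    have : (m : ℝ) + 1 ≠ 0 := by positivity
    push_cast
    rw [show (m : ℝ) + 2 - 1 = m + 1 by ring]
    field_simp
  rw [mul_pow, mul_pow, hδp]
  have hc2 : (1 / (2 ^ (m + 2) * C)) ^ (m + 1) ≤ 1 / (2 ^ (m + 2) * C) := by
    apply pow_le_of_le_one (by positivity) _ (by omega)
    rw [div_le_one (by positivity)]
    have : (1 : ℝ) ≤ 2 ^ (m + 2) := one_le_pow₀ (by norm_num)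
    nlinarith
  calc _ ≤ 1 / (2 ^ (m + 2) * C) * δ ^ (m + 2) * (P : ℝ) ^ (m + 1) := by gcongr
    _ = ((P : ℝ) / 2) ^ (m + 2) / (C * P / δ ^ (m + 2)) := by
        rw [div_pow]; field_simp; ring
    _ ≤ _ := by
        rw [div_le_iff₀ (by positivity)]
        exact h6

lemma conv_eq {P : ℕ} [Fact P.Prime] (A B : Finset (ZMod P)) (n : ZMod P) :
    convP (fCfun A) (fCfun B) n = (P : ℝ) / (#A * #B) * #(B.filter (fun y => n - y ∈ A)) := by
  have hP : (P : ℝ) ≠ 0 := by exact_mod_cast (Fact.out : P.Prime).ne_zero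
  have h1 : ((#(B.filter (fun y => n - y ∈ A)) : ℕ) : ℝ) = 
      ∑ y : ZMod P, (if n - y ∈ A then (1 : ℝ) else 0) * (if y ∈ B then 1 else 0) := by
    rw [← Finset.sum_boole]
    simp only [mul_ite, mul_one, mul_zero]
    rw [Finset.sum_ite_mem, univ_inter]
  rw [h1, convP, mul_sum, mul_sum]
  apply Finset.sum_congr rfl
  intro y _
  simp only [fCfun]
  generalize (if n - y ∈ A then (1 : ℝ) else 0) = u
  generalize (if y ∈ B then (1 : ℝ) else 0) = v
  field_simp

lemma sum_x {P : ℕ} [Fact P.Prime] (A B : Finset (ZMod P)) :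
    ∑ n : ZMod P, (#(B.filter (fun y => n - y ∈ A)) : ℝ) = #A * #B := by
  simp_rw [← Finset.sum_boole]
  rw [Finset.sum_comm]
  have : ∀ y ∈ B, ∑ n : ZMod P, (if n - y ∈ A then (1 : ℝ) else 0) = #A := by
    intro y _
    refine (Equiv.sum_comp (Equiv.subRight y) (fun m => if m ∈ A then (1 : ℝ) else 0)).trans ?_
    simp
  rw [Finset.sum_congr rfl this, sum_const, nsmul_eq_mul, mul_comm]

lemma lam_ge {P : ℕ} [Fact P.Prime] {s : ℕ} (cc : Fin s → ℤ) (f : ZMod P → ℝ) (hf : ∀ n, 0 ≤ f n) :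
    (1 / 2 : ℝ) ^ s * (#(univ.filter (fun x : Fin s → ZMod P =>
            (∀ i, x i ∈ univ.filter (fun n => 1 / 2 ≤ f n)) ∧ ∑ i, (cc i : ZMod P) * x i = 0)) : ℝ) ≤ LamL cc f := by
  rw [LamL, mul_comm, ← nsmul_eq_mul]
  refine le_trans (Finset.card_nsmul_le_sum _ (fun n => ∏ i, f (n i)) _ ?_) ?_
  · intro x hx
    have hx := (mem_filter.1 hx).2.1
    calc (1 / 2 : ℝ) ^ s = ∏ i : Fin s, (1 / 2 : ℝ) := by simp
      _ ≤ _ := Finset.prod_le_prod (fun _ _ => by norm_num) fun i _ => (mem_filter.1 (hx i)).2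
  · apply Finset.sum_le_sum_of_subset_of_nonneg
    · intro x hx
      have hx := (mem_filter.1 hx).2.2
      exact mem_filter.2 ⟨mem_univ _, hx⟩
    · intro x _ _
      exact Finset.prod_nonneg fun i _ => hf _

lemma alg_aux (x c d B r C P w : ℝ) (l : ℕ) (hc : c ≠ 0) (hd : d ≠ 0) (hu : B * r ≠ 0) :
    (x / (c * d * (B * r))) ^ l * (2 ^ l * (2 * B) ^ l * (C * P * r ^ l) + w * P * (B * r) ^ l) =
    (x / c) ^ l * (4 ^ l * C + w) * P / d ^ l := by
  have h1 : 2 ^ l * (2 * B) ^ l * (C * P * r ^ l) = 4 ^ l * C * P * (B * r) ^ l := by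
    rw [show (4 : ℝ) = 2 * 2 by norm_num]
    simp only [mul_pow]; ring
  have h2 : (x / (c * d * (B * r))) ^ l = (x / c) ^ l / d ^ l / (B * r) ^ l := by
    rw [← div_pow, ← div_pow, div_div, div_div, mul_assoc]
  have h3 : (B * r) ^ l ≠ 0 := pow_ne_zero _ hu
  have h4 : d ^ l ≠ 0 := pow_ne_zero _ hd
  rw [h1, h2]
  generalize (B * r) ^ l = u at *
  generalize d ^ l = v at *
  generalize (x / c) ^ l = z at *
  field_simp

end

set_option maxHeartbeats 2000000 in
theorem stmt4
    (k : ℕ) (hk : 1 ≤ k) (a b : Fin k → ℤ) (ha : ∀ i, a i ≠ 0)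
    (F : ℤ → ℤ) (hF : ∀ n : ℤ, F n = ∏ i, (a i * n + b i))
    (hdisc : (∏ i, a i) *
      ∏ i, ∏ j ∈ Finset.univ.filter (fun j => j ≠ i), (a i * b j - b i * a j) ≠ 0)
    (hadm : ∀ p : ℕ, p.Prime → ∃ n : ℤ, ¬ ((p : ℤ) ∣ F n))
    (s : ℕ) (cc : Fin s → ℤ) (hcc : ∀ i, cc i ≠ 0) (hti : ∑ i, cc i = 0)
    (hL : ℝ → ℝ) (hLnn : ∀ η : ℝ, 0 < η → η ≤ 1 → 0 ≤ hL η)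
    (hhL : ∀ (Q : ℕ) [Fact Q.Prime], ∀ η : ℝ, 0 < η → η ≤ 1 →
      ∀ A : Finset (ZMod Q), η * (Q : ℝ) ≤ (A.card : ℝ) →
        hL η * (Q : ℝ) ^ (s - 1) ≤
          ((Finset.univ.filter (fun x : Fin s → ZMod Q =>
            (∀ i, x i ∈ A) ∧ ∑ i, (cc i : ZMod Q) * x i = 0)).card : ℝ))
    (c₀ : ℝ) (hc₀ : 0 < c₀)
    (l : ℕ) (hl : 2 ≤ l) :
    ∃ (c₁ c₂ : ℝ) (N₁ : ℕ), 0 < c₁ ∧ 0 < c₂ ∧ c₂ ≤ 1 ∧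
      ∀ N : ℕ, N₁ ≤ N →
      ∀ A : Finset ℕ, A ⊆ SFset F N ((N : ℝ) ^ ((1 : ℝ) / (4 * k + 1))) →
      ∀ δ : ℝ, 0 < δ →
        (A.card : ℝ) = δ * ((SFset F N ((N : ℝ) ^ ((1 : ℝ) / (4 * k + 1)))).card : ℝ) →
      ∀ b₀ : ℕ, b₀ < primor (Real.log N / 3) →
        Int.gcd (F b₀) (primor (Real.log N / 3)) = 1 →
        c₀ * δ * (Real.log (Real.log N)) ^ k / (Real.log N) ^ k *
            (N : ℝ) / (primor (Real.log N / 3) : ℝ)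
          ≤ ((Abset A N (primor (Real.log N / 3)) b₀).card : ℝ) →
      ∀ (P : ℕ) [Fact P.Prime],
        ((∑ i ∈ Finset.univ.filter (fun i => 0 < cc i), cc i : ℤ) : ℝ) *
            (N : ℝ) / (primor (Real.log N / 3) : ℝ) ≤ (P : ℝ) →
        (P : ℝ) ≤ 2 * ((∑ i ∈ Finset.univ.filter (fun i => 0 < cc i), cc i : ℤ) : ℝ) *
            (N : ℝ) / (primor (Real.log N / 3) : ℝ) →
        (Real.log P) ^ (-(100 : ℝ)) < δ →
        ∀ B₀ : Finset ℤ, (∀ x ∈ B₀, 4 * |x| ≤ (P : ℤ)) →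
          ∀ B : Finset (ZMod P),
            B = B₀.image (fun x : ℤ => (x : ZMod P)) →
            (Real.log P) ^ (k + 101) ≤ (B.card : ℝ) →
            c₁ * hL (c₂ * δ ^ ((l : ℝ) / ((l : ℝ) - 1))) * (P : ℝ) ^ (s - 1) ≤
              LamL cc (convP
                (fCfun ((Abset A N (primor (Real.log N / 3)) b₀).image
                  (fun n : ℕ => (n : ZMod P))))
                (fCfun B)) := by
  classical
  have hdisc' : ∀ i j, i ≠ j → a i * b j - b i * a j ≠ 0 := by
    intro i j hij
    have h1 := right_ne_zero_of_mul hdisc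
    have h2 := Finset.prod_ne_zero_iff.1 h1 i (Finset.mem_univ i)
    exact Finset.prod_ne_zero_iff.1 h2 j (Finset.mem_filter.2 ⟨Finset.mem_univ j, hij.symm⟩)
  have hcZ : (0 : ℤ) ≤ ∑ i ∈ Finset.univ.filter (fun i => 0 < cc i), cc i :=
    Finset.sum_nonneg fun i hi => (Finset.mem_filter.1 hi).2.le
  generalize (∑ i ∈ Finset.univ.filter (fun i => 0 < cc i), cc i) = cZ at hcZ ⊢
  have hc0 : (0 : ℝ) ≤ (cZ : ℝ) := by exact_mod_cast hcZ
  obtain ⟨C, hC0, hCev⟩ := main_sieve k hk a b ha F hF hdisc' l (by omega) (cZ : ℝ) hc0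
  have hcast : Filter.Tendsto (fun N : ℕ => (N : ℝ)) Filter.atTop Filter.atTop := tendsto_natCast_atTop_atTop
  have hlog : Filter.Tendsto (fun N : ℕ => Real.log N) Filter.atTop Filter.atTop := 
    (Real.tendsto_log_atTop.comp hcast)
  have hll : Filter.Tendsto (fun N : ℕ => Real.log (Real.log N)) Filter.atTop Filter.atTop := 
    Real.tendsto_log_atTop.comp hlog
  obtain ⟨N₁, hN₁⟩ := Filter.eventually_atTop.1 (hCev.and ((Filter.eventually_ge_atTop 1).and 
    ((hlog.eventually_ge_atTop (2 ^ (k + 101))).and (hll.eventually_ge_atTop 1))))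
  set C' : ℝ := max 1 ((2 * cZ / c₀) ^ l * (4 ^ l * C + (2 * l : ℝ) ^ l)) with hC'
  have hC'1 : 1 ≤ C' := le_max_left _ _
  have hC'0 : 0 < C' := by linarith
  have h2l : (1 : ℝ) ≤ 2 ^ l := one_le_pow₀ (by norm_num)
  refine ⟨(1 / 2) ^ s, 1 / (2 ^ l * C'), N₁, by positivity, by positivity, ?_, ?_⟩
  · rw [div_le_one (by positivity)]
    nlinarith
  intro N hN A hA δ hδ _ b₀ _ _ hAb P hPf hP1 hP2 _ B₀ _ B _ hB
  obtain ⟨hsv, hN1, hlN, hllN⟩ := hN₁ N hN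
  have hPp : P.Prime := hPf.out
  have hPr : (0 : ℝ) < P := by exact_mod_cast hPp.pos
  set M := primor (Real.log N / 3) with hM
  have hMle : (M : ℝ) ≤ (N : ℝ) ^ ((1 : ℝ) / 2) := primor_le N hN1
  have hNr : (1 : ℝ) ≤ N := by exact_mod_cast hN1
  have hM0 : 0 < M := by
    apply Finset.prod_pos
    intro p hp
    exact (Finset.mem_filter.1 hp).2.pos
  have hMr : (0 : ℝ) < M := by exact_mod_cast hM0
  have hc1 : (1 : ℝ) ≤ cZ := by
    have h1 : cZ ≠ 0 := by
      rintro rfl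
      simp at hP2
      exact hPp.ne_zero hP2
    have h2 : (1 : ℤ) ≤ cZ := by omega
    exact_mod_cast h2
  have hP1' : (N : ℝ) / M ≤ P := by
    refine le_trans ?_ hP1
    gcongr
    nlinarith
  have hNPM : N ≤ P * M := by
    rw [div_le_iff₀ hMr] at hP1'
    exact_mod_cast hP1'
  have hPN : (N : ℝ) ^ ((1 : ℝ) / 2) ≤ P := by
    refine le_trans ?_ hP1'
    rw [le_div_iff₀ hMr]
    calc _ ≤ (N : ℝ) ^ ((1 : ℝ) / 2) * (N : ℝ) ^ ((1 : ℝ) / 2) := by gcongr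
      _ = N := by rw [← Real.rpow_add (by linarith)]; norm_num
  have hlN1 : (1 : ℝ) ≤ Real.log N := le_trans (one_le_pow₀ (by norm_num)) hlN
  have hlN0 : (0 : ℝ) < Real.log N := by linarith
  have hlP : Real.log N / 2 ≤ Real.log P := by
    have h1 := Real.log_le_log (by positivity) hPN
    rw [Real.log_rpow (by linarith)] at h1
    linarith
  set ρ : ℝ := (Real.log (Real.log N) / Real.log N) ^ k with hρ
  have hρ0 : 0 < ρ := by positivity
  clear_value ρ
  have hBρ : 1 ≤ (B.card : ℝ) * ρ := by
    have h1 : (Real.log N) ^ k ≤ (B.card : ℝ) := by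
      refine le_trans ?_ hB
      calc (Real.log N) ^ k ≤ (Real.log N / 2) ^ (k + 101) := by
            rw [div_pow, le_div_iff₀ (by positivity)]
            calc _ ≤ (Real.log N) ^ k * Real.log N := by gcongr
              _ = (Real.log N) ^ (k + 1) := by ring
              _ ≤ _ := pow_le_pow_right₀ hlN1 (by omega)
        _ ≤ _ := by gcongr
    have h2 : 1 / (Real.log N) ^ k ≤ ρ := by
      rw [hρ, div_pow]
      gcongr
      exact one_le_pow₀ hllN
    calc (1 : ℝ) = (Real.log N) ^ k * (1 / (Real.log N) ^ k) := by field_simp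
      _ ≤ _ := by gcongr
  have hB0 : (0 : ℝ) < B.card := by
    by_contra h
    have : (B.card : ℝ) = 0 := le_antisymm (not_lt.1 h) (by positivity)
    rw [this] at hBρ
    linarith
  set As := Abset A N M b₀ with hAs
  have hAsm : ∀ n ∈ As, b₀ + n * M ∈ SFset F N ((N : ℝ) ^ ((1 : ℝ) / (4 * k + 1))) := 
    fun n hn => hA (Finset.mem_filter.1 hn).2
  have hAs1 : ∀ n ∈ As, 1 ≤ b₀ + n * M ∧ b₀ + n * M ≤ N := fun n hn => 
    Finset.mem_Icc.1 (Finset.mem_filter.1 (hAsm n hn)).1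
  have hAsP : ∀ n ∈ As, n ≤ P := by
    intro n hn
    have h1 := (hAs1 n hn).2
    have h2 : n * M ≤ P * M := by omega
    exact Nat.le_of_mul_le_mul_right h2 hM0
  set A' := As.image (fun n : ℕ => (n : ZMod P)) with hA'
  have hcard : A'.card = As.card := by
    apply Finset.card_image_of_injOn
    have key : ∀ x ∈ As, ∀ y ∈ As, (x : ZMod P) = y → ¬ x < y := by
      intro x hx y hy hxy hlt
      have h1 := (ZMod.natCast_eq_natCast_iff _ _ _).1 hxy
      have h2 := (Nat.modEq_iff_dvd' hlt.le).1 h1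
      have h3 := Nat.le_of_dvd (by omega) h2
      have h4 := hAsP y hy
      have hy' : y = P := by omega
      have hx' : x = 0 := by omega
      have h5 := (hAs1 x hx).1
      have h6 := (hAs1 y hy).2
      rw [hx'] at h5
      rw [hy'] at h6
      omega
    intro x hx y hy hxy
    rcases lt_trichotomy x y with h | h | h
    · exact absurd h (key x hx y hy hxy)
    · exact h
    · exact absurd h (key y hy x hx hxy.symm)
  clear_value As A' M
  have hA'ge : c₀ * δ * ρ * P / (2 * cZ) ≤ (A'.card : ℝ) := by
    rw [hcard]
    refine le_trans ?_ hAb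
    rw [div_le_iff₀ (by positivity)]
    calc c₀ * δ * ρ * P ≤ c₀ * δ * ρ * (2 * cZ * N / M) := by gcongr
      _ = _ := by rw [hρ, div_pow]; ring
  have hA'0 : (0 : ℝ) < A'.card := lt_of_lt_of_le (by positivity) hA'ge
  set f := convP (fCfun A') (fCfun B) with hf
  have hfeq : ∀ n, f n = (P : ℝ) / (A'.card * B.card) * (B.filter (fun y => n - y ∈ A')).card := 
    fun n => conv_eq A' B n
  clear_value f
  have hf0 : ∀ n, 0 ≤ f n := fun n => by rw [hfeq]; positivity
  have hfs : ∑ n, f n = P := by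
    simp_rw [hfeq]
    rw [← Finset.mul_sum, sum_x]
    field_simp
  have hmom : ∑ n, f n ^ l ≤ C' * P / δ ^ l := by
    simp_rw [hfeq, mul_pow]
    rw [← Finset.mul_sum]
    have hmo := moment P l As hAsP B (C * P * ρ ^ l) (by positivity) (by
      intro T hT hTd S hS hST
      rw [hρ, ← pow_mul]
      refine hsv b₀ P hP1' hP2 T hT hTd S hS ?_
      intro n hn x hx
      obtain ⟨a', ha', ha''⟩ := hST n hn x hx
      refine ⟨b₀ + a' * M, hAsm a' ha', ?_⟩
      rw [← ha'']
      push_cast; ring)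
    rw [← hA'] at hmo
    have hq : (P : ℝ) / (A'.card * B.card) ≤ 2 * cZ / (c₀ * δ * (B.card * ρ)) := by
      rw [div_le_div_iff₀ (by positivity) (by positivity)]
      rw [div_le_iff₀ (by positivity)] at hA'ge
      calc (P : ℝ) * (c₀ * δ * (B.card * ρ)) = (c₀ * δ * ρ * P) * B.card := by ring
        _ ≤ (A'.card * (2 * cZ)) * B.card := by gcongr
        _ = _ := by ring
    have hpw : (1 : ℝ) ≤ (B.card * ρ) ^ l := one_le_pow₀ hBρ
    calc _ ≤ (2 * cZ / (c₀ * δ * (B.card * ρ))) ^ l * (2 ^ l * (2 * B.card : ℝ) ^ l * (C * P * ρ ^ l) + (2 * l : ℝ) ^ l * P) :=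
          mul_le_mul (pow_le_pow_left₀ (by positivity) hq l) hmo (Finset.sum_nonneg fun _ _ => by positivity) (by positivity)
      _ ≤ (2 * cZ / (c₀ * δ * (B.card * ρ))) ^ l * (2 ^ l * (2 * B.card : ℝ) ^ l * (C * P * ρ ^ l) + (2 * l : ℝ) ^ l * P * (B.card * ρ) ^ l) := by
          refine mul_le_mul_of_nonneg_left (add_le_add le_rfl ?_) (by positivity)
          exact le_mul_of_one_le_right (by positivity) hpw
      _ = ((2 * cZ / c₀) ^ l * (4 ^ l * C + (2 * l : ℝ) ^ l)) * P / δ ^ l := by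
          exact alg_aux _ _ _ _ _ _ _ _ _ hc₀.ne' hδ.ne' (mul_pos hB0 hρ0).ne'
      _ ≤ _ := by
          gcongr
          exact le_max_right _ _
  have hlev := level P f hfs l hl δ C' hδ hC'1 hf0 hmom
  have hη0 : 0 < 1 / (2 ^ l * C') * δ ^ ((l : ℝ) / ((l : ℝ) - 1)) := by positivity
  have hη1 : 1 / (2 ^ l * C') * δ ^ ((l : ℝ) / ((l : ℝ) - 1)) ≤ 1 := by
    have h1 : ((Finset.univ.filter (fun n => 1 / 2 ≤ f n)).card : ℝ) ≤ P := by
      have := Finset.card_filter_le (Finset.univ : Finset (ZMod P)) (fun n => 1 / 2 ≤ f n)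
      rw [Finset.card_univ, ZMod.card] at this
      exact_mod_cast this
    have h2 := hlev.trans h1
    by_contra hcon
    push Not at hcon
    nlinarith
  have hfin := hhL P _ hη0 hη1 _ hlev
  rw [mul_assoc]
  refine le_trans (mul_le_mul_of_nonneg_left hfin (by positivity)) ?_
  refine le_trans (le_of_eq ?_) (lam_ge cc f hf0)
  congr!
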